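/- Let T > 0, let φ ∈ H^{12}(𝕋) be real-valued, and let u₁, u₂ ∈ C([0,T]; L²(𝕋)) ∩ L^∞([0,T]; H^{12}(𝕋)) be real-valued solutions (in the sense of distributions) of ∂_t u + γ₀∂_x⁵u + γ₁∂_x³u + γ₂∂_x u = N(∂_x³u,∂_x²u,∂_xu,u) on [0,T]×𝕋 with u₁(0,·) = u₂(0,·) = φ. Assume in addition that P_N(u₁(t)) ≥ 0 for all t ∈ [0,T]. Then u₁(t) = u₂(t) for all t ∈ [0,T]. -/

import Mathlib

/- Fifth order dispersive equations on the torus: uniqueness for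
   parabolic resonance type on [0,T] assuming P_N(u₁(t)) ≥ 0. -/

namespace FifthOrderStmt3

/-- Fourier coefficient of a `2π`-periodic function `f : ℝ → ℝ`:
`f̂(k) = (1/2π) ∫_0^{2π} f(x) e^{-ikx} dx`. -/
noncomputable def fc (f : ℝ → ℝ) (k : ℤ) : ℂ :=
  (Complex.ofReal (2 * Real.pi))⁻¹ *
    ∫ x in (0:ℝ)..(2 * Real.pi), (f x : ℂ) * Complex.exp (-Complex.I * (k : ℂ) * (x : ℂ))

/-- Sobolev norm `‖f‖_{H^s} = (Σ_k (1+k²)^s |f̂(k)|²)^{1/2}`. -/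
noncomputable def hsNorm (s : ℕ) (f : ℝ → ℝ) : ℝ :=
  Real.sqrt (∑' k : ℤ, (1 + (k : ℝ) ^ 2) ^ s * ‖fc f k‖ ^ 2)

/-- `f` belongs to `H^s(𝕋)` (continuous representative, `2π`-periodic, finite `H^s` norm). -/
def MemHs (s : ℕ) (f : ℝ → ℝ) : Prop :=
  Continuous f ∧ Function.Periodic f (2 * Real.pi) ∧
    Summable (fun k : ℤ => (1 + (k : ℝ) ^ 2) ^ s * ‖fc f k‖ ^ 2)

/-- The nonlinearity `N(∂_x³f, ∂_x²f, ∂_xf, f) = Σ_j λ_j (∂_x³f)^{a_j}(∂_x²f)^{b_j}(∂_xf)^{c_j}f^{d_j}`. -/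
noncomputable def Nfun (j0 : ℕ) (lam : Fin j0 → ℝ) (a b c d : Fin j0 → ℕ)
    (f : ℝ → ℝ) (x : ℝ) : ℝ :=
  ∑ j : Fin j0, lam j * (iteratedDeriv 3 f x) ^ (a j) * (iteratedDeriv 2 f x) ^ (b j) *
    (deriv f x) ^ (c j) * (f x) ^ (d j)

/-- The functional `P_N(f) = Σ_j (λ_j b_j / 2π) ∫_𝕋 (∂_x³f)^{a_j}(∂_x²f)^{b_j-1}(∂_xf)^{c_j}f^{d_j} dx`. -/
noncomputable def PN (j0 : ℕ) (lam : Fin j0 → ℝ) (a b c d : Fin j0 → ℕ) (f : ℝ → ℝ) : ℝ :=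
  ∑ j : Fin j0, (lam j * (b j : ℝ) / (2 * Real.pi)) *
    ∫ x in (0:ℝ)..(2 * Real.pi),
      (iteratedDeriv 3 f x) ^ (a j) * (iteratedDeriv 2 f x) ^ (b j - 1) *
        (deriv f x) ^ (c j) * (f x) ^ (d j)

/-- `u` is a (distributional) solution of
`∂_t u + γ₀∂_x⁵u + γ₁∂_x³u + γ₂∂_x u = N(∂_x³u,∂_x²u,∂_xu,u)` on `[T₁,T₂] × 𝕋`:
each `u(t)` is `2π`-periodic and `C³` in `x` (so that `N(u)` is defined pointwise), and for every
smooth test function `ψ`, `2π`-periodic in `x` and compactly supported in time inside `(T₁,T₂)`,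
the integrated-by-parts identity holds. -/
def IsSolution (γ0 γ1 γ2 : ℝ) (j0 : ℕ) (lam : Fin j0 → ℝ) (a b c d : Fin j0 → ℕ)
    (T1 T2 : ℝ) (u : ℝ → ℝ → ℝ) : Prop :=
  (∀ t ∈ Set.Icc T1 T2, ContDiff ℝ 3 (u t) ∧ Function.Periodic (u t) (2 * Real.pi)) ∧
  ∀ ψ : ℝ → ℝ → ℝ, ContDiff ℝ (⊤ : ℕ∞) (Function.uncurry ψ) →
    (∀ t : ℝ, Function.Periodic (ψ t) (2 * Real.pi)) →
    (∀ t : ℝ, t ∉ Set.Ioo T1 T2 → ∀ x : ℝ, ψ t x = 0) →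
    (∫ t in T1..T2, ∫ x in (0:ℝ)..(2 * Real.pi),
      (u t x * (deriv (fun τ : ℝ => ψ τ x) t
        + γ0 * iteratedDeriv 5 (ψ t) x
        + γ1 * iteratedDeriv 3 (ψ t) x
        + γ2 * deriv (ψ t) x)
      + Nfun j0 lam a b c d (u t) x * ψ t x)) = 0

/-- `t ↦ u(t)` is continuous from `A` into `H^s(𝕋)`. -/
def ContInHs (s : ℕ) (A : Set ℝ) (u : ℝ → ℝ → ℝ) : Prop :=
  ∀ t₀ ∈ A, ∀ ε > 0, ∃ δ > 0, ∀ t ∈ A, |t - t₀| < δ →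
    hsNorm s (fun x => u t x - u t₀ x) < ε

/-! ### Functions of time and space with several continuous space derivatives -/

/-- The space derivative of a function of time and space. -/
noncomputable def dx (f : ℝ → ℝ → ℝ) : ℝ → ℝ → ℝ := fun t x => deriv (f t) x

/-- `Reg k f`: `f` and its first `k` space derivatives exist, are jointly continuous and
`2π`-periodic in space. -/
def Reg : ℕ → (ℝ → ℝ → ℝ) → Prop
  | 0, f => Continuous (Function.uncurry f) ∧ ∀ t, Function.Periodic (f t) (2 * Real.pi)
  | k + 1, f => (Continuous (Function.uncurry f) ∧ ∀ t, Function.Periodic (f t) (2 * Real.pi)) ∧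
      (∀ t, Differentiable ℝ (f t)) ∧ Reg k (dx f)

namespace Reg

variable {k n : ℕ} {f g : ℝ → ℝ → ℝ}

lemma base (h : Reg k f) :
    Continuous (Function.uncurry f) ∧ ∀ t, Function.Periodic (f t) (2 * Real.pi) := by
  cases k with
  | zero => exact h
  | succ k => exact h.1

lemma cont (h : Reg k f) : Continuous (Function.uncurry f) := h.base.1

lemma contx (h : Reg k f) (t : ℝ) : Continuous (f t) :=
  h.cont.comp (Continuous.prodMk_right t)

lemma per (h : Reg k f) (t : ℝ) : Function.Periodic (f t) (2 * Real.pi) := h.base.2 t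

lemma pred (h : Reg (k + 1) f) : Reg k f := by
  induction k generalizing f with
  | zero => exact h.1
  | succ k ih => exact ⟨h.1, h.2.1, ih h.2.2⟩

lemma mono (h : Reg n f) (hk : k ≤ n) : Reg k f := by
  induction hk with
  | refl => exact h
  | step _ ih => exact ih h.pred

lemma hasDerivAt (h : Reg (k + 1) f) (t x : ℝ) : HasDerivAt (f t) (dx f t x) x :=
  (h.2.1 t x).hasDerivAt

lemma of_hasDerivAt {f' : ℝ → ℝ → ℝ} (hc : Continuous (Function.uncurry f))
    (hp : ∀ t, Function.Periodic (f t) (2 * Real.pi))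
    (hd : ∀ t x, HasDerivAt (f t) (f' t x) x) (h : Reg k f') : Reg (k + 1) f := by
  have : dx f = f' := by
    funext t x
    exact (hd t x).deriv
  exact ⟨⟨hc, hp⟩, fun t x => (hd t x).differentiableAt, this ▸ h⟩

lemma add (hf : Reg k f) (hg : Reg k g) : Reg k (fun t x => f t x + g t x) := by
  induction k generalizing f g with
  | zero => exact ⟨hf.1.add hg.1, fun t => (hf.2 t).add (hg.2 t)⟩
  | succ k ih =>
    exact of_hasDerivAt (hf.cont.add hg.cont) (fun t => (hf.per t).add (hg.per t))
      (fun t x => (hf.hasDerivAt t x).add (hg.hasDerivAt t x)) (ih hf.2.2 hg.2.2)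

lemma mul (hf : Reg k f) (hg : Reg k g) : Reg k (fun t x => f t x * g t x) := by
  induction k generalizing f g with
  | zero => exact ⟨hf.1.mul hg.1, fun t => (hf.2 t).mul (hg.2 t)⟩
  | succ k ih =>
    exact of_hasDerivAt (hf.cont.mul hg.cont) (fun t => (hf.per t).mul (hg.per t))
      (fun t x => (hf.hasDerivAt t x).mul (hg.hasDerivAt t x))
      ((ih hf.2.2 hg.pred).add (ih hf.pred hg.2.2))

lemma ofTime {g : ℝ → ℝ} (hg : Continuous g) : Reg k (fun t _ => g t) := by
  induction k generalizing g with
  | zero => exact ⟨hg.comp continuous_fst, fun t x => rfl⟩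
  | succ k ih =>
    exact of_hasDerivAt (hg.comp continuous_fst) (fun t x => rfl)
      (fun t x => hasDerivAt_const x (g t)) (ih continuous_const)

lemma const (c : ℝ) : Reg k (fun _ _ => c) := ofTime continuous_const

lemma const_mul (c : ℝ) (hf : Reg k f) : Reg k (fun t x => c * f t x) := (const c).mul hf

lemma neg (hf : Reg k f) : Reg k (fun t x => -f t x) := by
  simpa using hf.const_mul (-1)

lemma sub (hf : Reg k f) (hg : Reg k g) : Reg k (fun t x => f t x - g t x) := by
  simpa [sub_eq_add_neg] using hf.add hg.neg

lemma pow (hf : Reg k f) (m : ℕ) : Reg k (fun t x => f t x ^ m) := by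
  induction m with
  | zero => simpa using const 1
  | succ m ih => simpa [pow_succ] using ih.mul hf

lemma sum {ι : Type*} (s : Finset ι) {F : ι → ℝ → ℝ → ℝ} (hF : ∀ i ∈ s, Reg k (F i)) :
    Reg k (fun t x => ∑ i ∈ s, F i t x) := by
  classical
  induction s using Finset.induction_on with
  | empty => simpa using const 0
  | insert i s hi ih =>
    simp only [Finset.sum_insert hi]
    exact (hF i (by simp)).add (ih fun j hj => hF j (by simp [hj]))

lemma dx_iterate (h : Reg n f) {i j : ℕ} (hij : i + j ≤ n) : Reg j (dx^[i] f) := by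
  induction i generalizing f n with
  | zero => exact h.mono (by omega)
  | succ i ih =>
    obtain ⟨m, rfl⟩ : ∃ m, n = m + 1 := ⟨n - 1, by omega⟩
    exact ih (n := m) h.2.2 (by omega)

/-- A periodic continuous function is bounded on a compact time interval. -/
lemma bounded (h : Reg k f) (T : ℝ) : ∃ C, 0 ≤ C ∧ ∀ t ∈ Set.Icc 0 T, ∀ x, |f t x| ≤ C := by
  obtain ⟨C, hC⟩ := ((isCompact_Icc (a := (0 : ℝ)) (b := T)).prod
    (isCompact_Icc (a := (0 : ℝ)) (b := 2 * Real.pi))).exists_bound_of_continuousOn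
    h.cont.continuousOn
  refine ⟨max C 0, le_max_right _ _, fun t ht x => ?_⟩
  obtain ⟨y, hy, hxy⟩ := (h.per t).exists_mem_Ico₀ Real.two_pi_pos x
  rw [hxy]
  exact (hC (t, y) ⟨ht, Set.Ico_subset_Icc_self hy⟩).trans (le_max_left _ _)

end Reg

lemma dx_iterate_eq (f : ℝ → ℝ → ℝ) (i : ℕ) (t : ℝ) : dx^[i] f t = iteratedDeriv i (f t) := by
  induction i with
  | zero => simp
  | succ i ih =>
    rw [Function.iterate_succ_apply', iteratedDeriv_succ, ← ih]
    rfl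

/-! ### Integrals depending on a parameter -/

lemma hasDerivAt_param {g g' : ℝ → ℝ → ℝ} {s : Set ℝ} (hs : IsOpen s)
    (hg : Continuous (Function.uncurry g)) (hg' : Continuous (Function.uncurry g'))
    (h : ∀ t ∈ s, ∀ x, HasDerivAt (fun τ => g τ x) (g' t x) t) (a b : ℝ) {t : ℝ} (ht : t ∈ s) :
    HasDerivAt (fun τ => ∫ x in a..b, g τ x) (∫ x in a..b, g' t x) t := by
  obtain ⟨ε, hε, hεs⟩ := Metric.isOpen_iff.1 hs t ht
  obtain ⟨C, hC⟩ := ((isCompact_closedBall t (ε / 2)).prod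
    (isCompact_uIcc (a := a) (b := b))).exists_bound_of_continuousOn hg'.continuousOn
  have hsub : Metric.closedBall t (ε / 2) ⊆ s :=
    (Metric.closedBall_subset_ball (by linarith)).trans hεs
  refine (intervalIntegral.hasDerivAt_integral_of_dominated_loc_of_deriv_le
    (bound := fun _ => C) (Metric.closedBall_mem_nhds t (half_pos hε))
    (Filter.Eventually.of_forall fun τ => ?_) ?_ ?_ ?_ ?_ ?_).2
  · exact (hg.comp (Continuous.prodMk_right τ)).aestronglyMeasurable
  · exact (hg.comp (Continuous.prodMk_right t)).intervalIntegrable _ _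
  · exact (hg'.comp (Continuous.prodMk_right t)).aestronglyMeasurable
  · exact Filter.Eventually.of_forall fun x hx τ hτ =>
      hC (τ, x) ⟨hτ, Set.uIoc_subset_uIcc hx⟩
  · exact continuous_const.intervalIntegrable _ _
  · exact Filter.Eventually.of_forall fun x _ τ hτ => h τ (hsub hτ) x

lemma continuous_param {g : ℝ → ℝ → ℝ} (hg : Continuous (Function.uncurry g)) (a b : ℝ) :
    Continuous fun t => ∫ x in a..b, g t x :=
  intervalIntegral.continuous_parametric_intervalIntegral_of_continuous' hg a b

lemma continuous_primitive_param {g : ℝ → ℝ → ℝ} (hg : Continuous (Function.uncurry g)) :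
    Continuous (Function.uncurry fun t x => ∫ y in (0 : ℝ)..x, g t y) := by
  have : Continuous (Function.uncurry fun (p : ℝ × ℝ) (y : ℝ) => g p.1 y) :=
    hg.comp ((continuous_fst.comp continuous_fst).prodMk continuous_snd)
  exact intervalIntegral.continuous_parametric_intervalIntegral_of_continuous this continuous_snd

lemma integral_swap {g : ℝ → ℝ → ℝ} (hg : Continuous (Function.uncurry g)) (a b : ℝ)
    {c d : ℝ} :
    ∫ t in a..b, ∫ x in c..d, g t x = ∫ x in c..d, ∫ t in a..b, g t x := by
  refine MeasureTheory.intervalIntegral_intervalIntegral_swap ?_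
  exact (hg.continuousOn.integrableOn_compact (isCompact_uIcc.prod isCompact_uIcc)).mono_set
    (Set.prod_mono Set.uIoc_subset_uIcc Set.uIoc_subset_uIcc)

/-- `f t x = f 0 x + ∫₀ᵗ F` on `[0,T]`. -/
def TInt (T : ℝ) (f F : ℝ → ℝ → ℝ) : Prop :=
  ∀ t ∈ Set.Icc 0 T, ∀ x, f t x = f 0 x + ∫ s in (0 : ℝ)..t, F s x

lemma TInt.dx {T : ℝ} {f F : ℝ → ℝ → ℝ} {k l : ℕ} (hf : Reg (k + 1) f) (hF : Reg (l + 1) F)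
    (h : TInt T f F) : TInt T (dx f) (dx F) := by
  intro t ht x
  have h1 : HasDerivAt (fun y => ∫ s in (0 : ℝ)..t, F s y)
      (∫ s in (0 : ℝ)..t, FifthOrderStmt3.dx F s x) x :=
    hasDerivAt_param (g := fun y s => F s y) (g' := fun y s => FifthOrderStmt3.dx F s y)
      isOpen_univ (hF.cont.comp continuous_swap) (hF.2.2.cont.comp continuous_swap)
      (fun y _ s => hF.hasDerivAt s y) 0 t (Set.mem_univ x)
  have h2 := (hf.hasDerivAt 0 x).add h1
  have h3 : f t = fun y => f 0 y + ∫ s in (0 : ℝ)..t, F s y := funext fun y => h t ht y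
  have h4 := hf.hasDerivAt t x
  rw [h3] at h4
  exact h4.unique h2

lemma TInt.hasDerivAt {T : ℝ} {f F : ℝ → ℝ → ℝ} (hF : Continuous (Function.uncurry F))
    (h : TInt T f F) {t : ℝ} (ht : t ∈ Set.Ioo 0 T) (x : ℝ) :
    HasDerivAt (fun τ => f τ x) (F t x) t := by
  have hFx : Continuous fun s => F s x := hF.comp (Continuous.prodMk_left x)
  have h1 := (intervalIntegral.integral_hasDerivAt_right (hFx.intervalIntegrable 0 t)
    (hFx.stronglyMeasurableAtFilter _ _) hFx.continuousAt).const_add (f 0 x)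
  refine h1.congr_of_eventuallyEq ?_
  filter_upwards [Ioo_mem_nhds ht.1 ht.2] with s hs
  exact h s (Set.Ioo_subset_Icc_self hs) x

/-- `f` is continuously differentiable in time on `(0,T)`. -/
def TReg (T : ℝ) (f : ℝ → ℝ → ℝ) : Prop :=
  ∃ f' : ℝ → ℝ → ℝ, Continuous (Function.uncurry f') ∧
    ∀ t ∈ Set.Ioo 0 T, ∀ x, HasDerivAt (fun τ => f τ x) (f' t x) t

namespace TReg

variable {T : ℝ} {f g : ℝ → ℝ → ℝ}

lemma const (c : ℝ) : TReg T (fun _ _ => c) :=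
  ⟨fun _ _ => 0, continuous_const, fun t _ _ => hasDerivAt_const t c⟩

lemma add (hf : TReg T f) (hg : TReg T g) : TReg T (fun t x => f t x + g t x) := by
  obtain ⟨f', hf1, hf2⟩ := hf
  obtain ⟨g', hg1, hg2⟩ := hg
  exact ⟨fun t x => f' t x + g' t x, hf1.add hg1, fun t ht x => (hf2 t ht x).add (hg2 t ht x)⟩

lemma mul (hfc : Continuous (Function.uncurry f)) (hgc : Continuous (Function.uncurry g))
    (hf : TReg T f) (hg : TReg T g) : TReg T (fun t x => f t x * g t x) := by
  obtain ⟨f', hf1, hf2⟩ := hf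
  obtain ⟨g', hg1, hg2⟩ := hg
  exact ⟨fun t x => f' t x * g t x + f t x * g' t x, (hf1.mul hgc).add (hfc.mul hg1),
    fun t ht x => (hf2 t ht x).mul (hg2 t ht x)⟩

lemma const_mul (c : ℝ) (hf : TReg T f) : TReg T (fun t x => c * f t x) := by
  obtain ⟨f', hf1, hf2⟩ := hf
  exact ⟨fun t x => c * f' t x, continuous_const.mul hf1, fun t ht x => (hf2 t ht x).const_mul c⟩

lemma pow (hfc : Continuous (Function.uncurry f)) (hf : TReg T f) (m : ℕ) :
    TReg T (fun t x => f t x ^ m) := by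
  induction m with
  | zero => simpa using const 1
  | succ m ih => simpa [pow_succ] using mul (f := fun t x => f t x ^ m) (hfc.pow m) hfc ih hf

lemma sum {ι : Type*} (s : Finset ι) {F : ι → ℝ → ℝ → ℝ} (hF : ∀ i ∈ s, TReg T (F i)) :
    TReg T (fun t x => ∑ i ∈ s, F i t x) := by
  classical
  induction s using Finset.induction_on with
  | empty => simpa using const 0
  | insert i s hi ih =>
    simp only [Finset.sum_insert hi]
    exact (hF i (by simp)).add (ih fun j hj => hF j (by simp [hj]))

lemma primitive (hfc : Continuous (Function.uncurry f)) (hf : TReg T f) :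
    TReg T (fun t x => ∫ y in (0 : ℝ)..x, f t y) := by
  obtain ⟨f', hf1, hf2⟩ := hf
  exact ⟨fun t x => ∫ y in (0 : ℝ)..x, f' t y, continuous_primitive_param hf1,
    fun t ht x => hasDerivAt_param isOpen_Ioo hfc hf1 hf2 0 x ht⟩

lemma mean_mul (hfc : Continuous (Function.uncurry f)) (hf : TReg T f) (b : ℝ) :
    TReg T (fun t x => x * ∫ y in (0 : ℝ)..b, f t y) := by
  obtain ⟨f', hf1, hf2⟩ := hf
  exact ⟨fun t x => x * ∫ y in (0 : ℝ)..b, f' t y,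
    continuous_snd.mul ((continuous_param hf1 0 b).comp continuous_fst),
    fun t ht x => (hasDerivAt_param isOpen_Ioo hfc hf1 hf2 0 b ht).const_mul x⟩

end TReg

/-! ### Fourier series -/

lemma cexp_periodic (k : ℤ) :
    Function.Periodic (fun x : ℝ => Complex.exp (Complex.I * k * x)) (2 * Real.pi) := by
  intro x
  have : Complex.I * k * ((x + 2 * Real.pi : ℝ) : ℂ) =
      Complex.I * k * x + k * (2 * Real.pi * Complex.I) := by push_cast; ring
  simp only [this, Complex.exp_add, Complex.exp_int_mul_two_pi_mul_I, mul_one]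

lemma norm_cexp (k : ℤ) (x : ℝ) : ‖Complex.exp (Complex.I * k * x)‖ = 1 := by
  rw [Complex.norm_exp]
  simp

/-- Pointwise Fourier inversion for absolutely summable coefficients. -/
lemma hasSum_fc {f : ℝ → ℝ} (hf : Continuous f) (hp : Function.Periodic f (2 * Real.pi))
    (hs : Summable fun k => fc f k) (x : ℝ) :
    HasSum (fun k : ℤ => fc f k * Complex.exp (Complex.I * k * x)) (f x) := by
  have : Fact (0 < 2 * Real.pi) := ⟨Real.two_pi_pos⟩
  have hp' : Function.Periodic (fun y => (f y : ℂ)) (2 * Real.pi) := fun y => by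
    simp only [hp y]
  have hcont : Continuous hp'.lift :=
    continuous_coinduced_dom.2 (Complex.continuous_ofReal.comp hf)
  let g : C(AddCircle (2 * Real.pi), ℂ) := ⟨hp'.lift, hcont⟩
  have hcoef : ∀ k, fourierCoeff g k = fc f k := by
    intro k
    rw [fourierCoeff_eq_intervalIntegral _ _ 0, fc, zero_add, Complex.real_smul]
    congr 1
    · push_cast; simp
    · refine intervalIntegral.integral_congr fun y _ => ?_
      simp only [g, ContinuousMap.coe_mk, Function.Periodic.lift_coe, fourier_coe_apply,
        smul_eq_mul]
      rw [mul_comm]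
      congr 2
      have : (Real.pi : ℂ) ≠ 0 := by exact_mod_cast Real.pi_ne_zero
      push_cast
      field_simp
  have h := has_pointwise_sum_fourier_series_of_summable (f := g) (by simpa [funext hcoef] using hs)
    (x : AddCircle (2 * Real.pi))
  have h2 : ∀ k : ℤ, fourierCoeff g k • fourier k (x : AddCircle (2 * Real.pi)) =
      fc f k * Complex.exp (Complex.I * k * x) := by
    intro k
    rw [hcoef, fourier_coe_apply, smul_eq_mul]
    congr 2
    have : (Real.pi : ℂ) ≠ 0 := by exact_mod_cast Real.pi_ne_zero
    push_cast
    field_simp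
  simp only [h2] at h
  simpa [g] using h

/-- The real part of the trigonometric series with coefficients `c t k`. -/
noncomputable def series (c : ℝ → ℤ → ℂ) (t x : ℝ) : ℝ :=
  (∑' k : ℤ, c t k * Complex.exp (Complex.I * k * x)).re

section series

variable {c : ℝ → ℤ → ℂ} {b : ℤ → ℝ} {n : ℕ}

lemma norm_term (z : ℂ) (k : ℤ) (x : ℝ) :
    ‖z * Complex.exp (Complex.I * k * x)‖ = ‖z‖ := by
  rw [norm_mul, norm_cexp, mul_one]

lemma weight_step (hb : ∀ t k, ‖c t k‖ ≤ b k)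
    (hs : Summable fun k : ℤ => (1 + |(k : ℝ)|) ^ (n + 1) * b k) :
    Summable fun k : ℤ => (1 + |(k : ℝ)|) ^ n * (|(k : ℝ)| * b k) := by
  have hb0 : ∀ k, 0 ≤ b k := fun k => (norm_nonneg _).trans (hb 0 k)
  refine Summable.of_nonneg_of_le (fun k => ?_) (fun k => ?_) hs
  · have := hb0 k; positivity
  · rw [pow_succ, mul_assoc]
    have := hb0 k
    gcongr
    linarith

lemma weight_zero (hb : ∀ t k, ‖c t k‖ ≤ b k)
    (hs : Summable fun k : ℤ => (1 + |(k : ℝ)|) ^ n * b k) : Summable b := by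
  have hb0 : ∀ k, 0 ≤ b k := fun k => (norm_nonneg _).trans (hb 0 k)
  refine Summable.of_nonneg_of_le hb0 (fun k => ?_) hs
  refine le_mul_of_one_le_left (hb0 k) (one_le_pow₀ ?_)
  linarith [abs_nonneg (k : ℝ)]

lemma norm_deriv_coef (hb : ∀ t k, ‖c t k‖ ≤ b k) (t : ℝ) (k : ℤ) :
    ‖Complex.I * k * c t k‖ ≤ |(k : ℝ)| * b k := by
  rw [norm_mul, norm_mul, Complex.norm_I, one_mul, Complex.norm_intCast]
  exact mul_le_mul_of_nonneg_left (hb t k) (abs_nonneg _)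

lemma series_continuous (hc : ∀ k, Continuous fun t => c t k) (hb : ∀ t k, ‖c t k‖ ≤ b k)
    (hs : Summable b) : Continuous (Function.uncurry (series c)) := by
  refine Complex.continuous_re.comp (continuous_tsum (fun k => ?_) hs fun k p => ?_)
  · exact ((hc k).comp continuous_fst).mul (by fun_prop)
  · rw [norm_term]
    exact hb _ k

lemma series_periodic (t : ℝ) : Function.Periodic (series c t) (2 * Real.pi) := by
  intro x
  simp only [series]
  congr 1
  exact tsum_congr fun k => congrArg (c t k * ·) (cexp_periodic k x)

lemma series_hasDerivAt (hb : ∀ t k, ‖c t k‖ ≤ b k)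
    (hs : Summable fun k : ℤ => (1 + |(k : ℝ)|) ^ (n + 1) * b k) (t x : ℝ) :
    HasDerivAt (series c t) (series (fun t k => Complex.I * k * c t k) t x) x := by
  have hsb : Summable fun k : ℤ => |(k : ℝ)| * b k :=
    weight_zero (n := n) (c := fun t k => Complex.I * k * c t k) (norm_deriv_coef hb)
      (weight_step hb hs)
  have key := hasDerivAt_tsum (𝕜 := ℝ) (y₀ := (0 : ℝ))
    (g := fun (k : ℤ) (x : ℝ) => c t k * Complex.exp (Complex.I * k * x))
    (g' := fun (k : ℤ) (x : ℝ) => Complex.I * k * c t k * Complex.exp (Complex.I * k * x))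
    hsb (fun k y => ?_) (fun k y => ?_) ?_ x
  · exact (Complex.reCLM.hasFDerivAt.comp_hasDerivAt x key)
  · have h1 : HasDerivAt (fun y : ℝ => Complex.I * k * (y : ℂ)) (Complex.I * k) y := by
      simpa using (Complex.ofRealCLM.hasDerivAt (x := y)).const_mul (Complex.I * (k : ℂ))
    refine (h1.cexp.const_mul (c t k)).congr_deriv ?_
    ring
  · rw [norm_term]
    exact norm_deriv_coef hb t k
  · refine Summable.of_norm_bounded (weight_zero hb hs) fun k => ?_
    rw [norm_term]
    exact hb t k

lemma series_reg (hc : ∀ k, Continuous fun t => c t k) (hb : ∀ t k, ‖c t k‖ ≤ b k)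
    (hs : Summable fun k : ℤ => (1 + |(k : ℝ)|) ^ n * b k) : Reg n (series c) := by
  induction n generalizing c b with
  | zero => exact ⟨series_continuous hc hb (weight_zero hb hs), series_periodic⟩
  | succ n ih =>
    exact Reg.of_hasDerivAt (series_continuous hc hb (weight_zero hb hs)) series_periodic
      (series_hasDerivAt hb hs) (ih (fun k => continuous_const.mul (hc k)) (norm_deriv_coef hb)
        (weight_step hb hs))

lemma dx_iterate_series {i : ℕ} (hi : i ≤ n) (hb : ∀ t k, ‖c t k‖ ≤ b k)
    (hs : Summable fun k : ℤ => (1 + |(k : ℝ)|) ^ n * b k) :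
    dx^[i] (series c) = series (fun t k => (Complex.I * k) ^ i * c t k) := by
  induction i generalizing c b n with
  | zero => simp
  | succ i ih =>
    obtain ⟨m, rfl⟩ : ∃ m, n = m + 1 := ⟨n - 1, by omega⟩
    have : dx (series c) = series (fun t k => Complex.I * k * c t k) := by
      funext t x
      exact (series_hasDerivAt hb hs t x).deriv
    rw [Function.iterate_succ_apply, this,
      ih (n := m) (by omega) (norm_deriv_coef hb) (weight_step hb hs)]
    simp only [pow_succ, mul_assoc]

end series

/-- Uniform bounds corresponding to `u ∈ C(ℝ; L²) ∩ L^∞(ℝ; H^{12})`. -/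
structure Tame (M : ℝ) (u : ℝ → ℝ → ℝ) : Prop where
  cont : ∀ t, Continuous (u t)
  per : ∀ t, Function.Periodic (u t) (2 * Real.pi)
  coef_cont : ∀ k, Continuous fun t => fc (u t) k
  coef_bound : ∀ t (k : ℤ), ‖fc (u t) k‖ ≤ M / (1 + (k : ℝ) ^ 2) ^ 6

lemma summable_one_add_sq_rpow {p : ℝ} (hp : 1 < 2 * p) :
    Summable fun k : ℤ => (1 + (k : ℝ) ^ 2) ^ (-p) := by
  refine Summable.of_norm_bounded_eventually (Real.summable_abs_int_rpow hp) ?_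
  have : {0}ᶜ ∈ (Filter.cofinite : Filter ℤ) := (Set.finite_singleton (0 : ℤ)).compl_mem_cofinite
  filter_upwards [this] with k hk
  have hk' : 0 < |(k : ℝ)| := by simpa using hk
  have h1 : (0 : ℝ) < 1 + (k : ℝ) ^ 2 := by positivity
  rw [Real.norm_of_nonneg (Real.rpow_nonneg h1.le _)]
  have h2 : |(k : ℝ)| ^ (-(2 * p)) = ((k : ℝ) ^ 2) ^ (-p) := by
    rw [← sq_abs, ← Real.rpow_natCast, ← Real.rpow_mul hk'.le]
    congr 1
    push_cast
    ring
  rw [h2]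
  refine Real.rpow_le_rpow_of_nonpos (by rw [← sq_abs]; positivity) (by linarith) ?_
  linarith

lemma summable_weight (M : ℝ) :
    Summable fun k : ℤ => (1 + |(k : ℝ)|) ^ 10 * (M / (1 + (k : ℝ) ^ 2) ^ 6) := by
  have h := (summable_one_add_sq_rpow (p := 1) (by norm_num)).mul_left (2 ^ 5 * |M|)
  refine Summable.of_norm_bounded h fun k => ?_
  have h1 : (0 : ℝ) < 1 + (k : ℝ) ^ 2 := by positivity
  rw [Real.rpow_neg h1.le, Real.rpow_one, norm_mul, norm_div, norm_pow, norm_pow,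
    Real.norm_eq_abs, Real.norm_eq_abs, Real.norm_eq_abs, abs_of_pos h1,
    abs_of_nonneg (by positivity : 0 ≤ 1 + |(k : ℝ)|)]
  have h3 : (1 + |(k : ℝ)|) ^ 2 ≤ 2 * (1 + (k : ℝ) ^ 2) := by
    nlinarith [sq_nonneg (1 - |(k : ℝ)|), sq_abs (k : ℝ)]
  have h4 : (1 + |(k : ℝ)|) ^ 10 ≤ 2 ^ 5 * (1 + (k : ℝ) ^ 2) ^ 5 := by
    calc (1 + |(k : ℝ)|) ^ 10 = ((1 + |(k : ℝ)|) ^ 2) ^ 5 := by ring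
      _ ≤ (2 * (1 + (k : ℝ) ^ 2)) ^ 5 := pow_le_pow_left₀ (by positivity) h3 5
      _ = _ := by ring
  calc (1 + |(k : ℝ)|) ^ 10 * (|M| / (1 + (k : ℝ) ^ 2) ^ 6)
      ≤ (2 ^ 5 * (1 + (k : ℝ) ^ 2) ^ 5) * (|M| / (1 + (k : ℝ) ^ 2) ^ 6) := by gcongr
    _ = _ := by field_simp

namespace Tame

variable {M : ℝ} {u : ℝ → ℝ → ℝ}

lemma eq_series (h : Tame M u) : u = series fun t k => fc (u t) k := by
  funext t x
  have hs : Summable fun k => fc (u t) k :=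
    Summable.of_norm_bounded (weight_zero (c := fun t k => fc (u t) k) h.coef_bound
      (summable_weight M)) fun k => h.coef_bound t k
  rw [series, (hasSum_fc (h.cont t) (h.per t) hs x).tsum_eq, Complex.ofReal_re]

lemma reg (h : Tame M u) : Reg 10 u := by
  rw [h.eq_series]
  exact series_reg h.coef_cont h.coef_bound (summable_weight M)

lemma dx_eq (h : Tame M u) {i : ℕ} (hi : i ≤ 10) :
    dx^[i] u = series fun t k => (Complex.I * k) ^ i * fc (u t) k := by
  conv_lhs => rw [h.eq_series]
  exact dx_iterate_series hi h.coef_bound (summable_weight M)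

end Tame

/-! ### Reduction to globally defined families -/

lemma fc_integrable {f : ℝ → ℝ} (hf : Continuous f) (k : ℤ) (a b : ℝ) :
    IntervalIntegrable (fun x : ℝ => (f x : ℂ) * Complex.exp (-Complex.I * (k : ℂ) * (x : ℂ)))
      MeasureTheory.volume a b :=
  Continuous.intervalIntegrable (by fun_prop) _ _

lemma fc_sub {f g : ℝ → ℝ} (hf : Continuous f) (hg : Continuous g) (k : ℤ) :
    fc (fun x => f x - g x) k = fc f k - fc g k := by
  simp only [fc]
  rw [← mul_sub, ← intervalIntegral.integral_sub (fc_integrable hf k _ _) (fc_integrable hg k _ _)]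
  congr 2
  funext x
  push_cast
  ring

lemma fc_bound_of_hsNorm {f : ℝ → ℝ} {M : ℝ} (hf : MemHs 12 f) (hM : hsNorm 12 f ≤ M) (k : ℤ) :
    ‖fc f k‖ ≤ M / (1 + (k : ℝ) ^ 2) ^ 6 := by
  have h1 : (0 : ℝ) < 1 + (k : ℝ) ^ 2 := by positivity
  rw [le_div_iff₀ (by positivity)]
  refine le_trans ?_ hM
  refine Real.le_sqrt_of_sq_le ?_
  refine le_trans (le_of_eq ?_) (hf.2.2.le_tsum k fun j _ => by positivity)
  ring

lemma fc_le_hsNorm_zero {f : ℝ → ℝ}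
    (hs : Summable fun k : ℤ => (1 + (k : ℝ) ^ 2) ^ 0 * ‖fc f k‖ ^ 2) (k : ℤ) :
    ‖fc f k‖ ≤ hsNorm 0 f := by
  refine Real.le_sqrt_of_sq_le ?_
  refine le_trans (le_of_eq ?_) (hs.le_tsum k fun j _ => by positivity)
  simp

/-- Projection of the time variable to `[0,T]`. -/
noncomputable def clamp (T t : ℝ) : ℝ := max 0 (min t T)

lemma clamp_mem {T : ℝ} (hT : 0 < T) (t : ℝ) : clamp T t ∈ Set.Icc 0 T :=
  ⟨le_max_left _ _, max_le hT.le (min_le_right _ _)⟩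

lemma clamp_of_mem {T t : ℝ} (ht : t ∈ Set.Icc 0 T) : clamp T t = t := by
  rw [clamp, min_eq_left ht.2, max_eq_right ht.1]

lemma clamp_abs_le (T t s : ℝ) : |clamp T t - clamp T s| ≤ |t - s| := by
  simp only [clamp]
  refine (abs_max_sub_max_le_max _ _ _ _).trans (max_le (by simp) ?_)
  exact (abs_min_sub_min_le_max _ _ _ _).trans (max_le le_rfl (by simp))

lemma tame_of_hyps {T M : ℝ} (hT : 0 < T) {u : ℝ → ℝ → ℝ}
    (hmem : ∀ t ∈ Set.Icc (0:ℝ) T, MemHs 12 (u t))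
    (hbdd : ∀ t ∈ Set.Icc (0:ℝ) T, hsNorm 12 (u t) ≤ M)
    (hcont : ContInHs 0 (Set.Icc (0:ℝ) T) u) : Tame M (fun t => u (clamp T t)) := by
  have hb : ∀ t ∈ Set.Icc (0 : ℝ) T, ∀ k : ℤ, ‖fc (u t) k‖ ≤ M / (1 + (k : ℝ) ^ 2) ^ 6 :=
    fun t ht k => fc_bound_of_hsNorm (hmem t ht) (hbdd t ht) k
  refine ⟨fun t => (hmem _ (clamp_mem hT t)).1, fun t => (hmem _ (clamp_mem hT t)).2.1,
    fun k => ?_, fun t k => hb _ (clamp_mem hT t) k⟩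
  rw [Metric.continuous_iff]
  intro t₀ ε hε
  obtain ⟨δ, hδ, h⟩ := hcont (clamp T t₀) (clamp_mem hT t₀) ε hε
  refine ⟨δ, hδ, fun t ht => ?_⟩
  have h1 := h (clamp T t) (clamp_mem hT t)
    ((clamp_abs_le T t t₀).trans_lt (by rwa [Real.dist_eq] at ht))
  have ht1 := clamp_mem hT t
  have ht0 := clamp_mem hT t₀
  have hfs := fc_sub (hmem _ ht1).1 (hmem _ ht0).1
  rw [dist_eq_norm, ← hfs]
  refine (fc_le_hsNorm_zero ?_ k).trans_lt h1
  have hM : 0 ≤ M := (Real.sqrt_nonneg _).trans (hbdd _ ht0)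
  refine Summable.of_norm_bounded
    ((summable_one_add_sq_rpow (p := 1) (by norm_num)).mul_left (4 * M ^ 2)) fun j => ?_
  have h1 : (0 : ℝ) < 1 + (j : ℝ) ^ 2 := by positivity
  rw [pow_zero, one_mul, norm_pow, norm_norm, hfs, Real.rpow_neg h1.le, Real.rpow_one]
  have h2 : ‖fc (u (clamp T t)) j - fc (u (clamp T t₀)) j‖ ≤ 2 * (M / (1 + (j : ℝ) ^ 2) ^ 6) :=
    (norm_sub_le _ _).trans (by linarith [hb _ ht1 j, hb _ ht0 j])
  have h3 : (1 + (j : ℝ) ^ 2) ≤ (1 + (j : ℝ) ^ 2) ^ 12 :=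
    le_self_pow₀ (by nlinarith [sq_nonneg (j : ℝ)]) (by norm_num)
  calc _ ≤ (2 * (M / (1 + (j : ℝ) ^ 2) ^ 6)) ^ 2 := pow_le_pow_left₀ (norm_nonneg _) h2 2
    _ = 4 * M ^ 2 * ((1 + (j : ℝ) ^ 2) ^ 12)⁻¹ := by field_simp; ring
    _ ≤ _ := by gcongr

/-! ### Distributional derivatives in one variable -/

/-- A continuous function whose distributional derivative is continuous is a primitive of it. -/
lemma eq_primitive_of_weak {T : ℝ} (hT : 0 < T) {p q : ℝ → ℝ} (hp : Continuous p)
    (hq : Continuous q)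
    (h : ∀ η : ℝ → ℝ, ContDiff ℝ (⊤ : ℕ∞) η → (∀ t, t ∉ Set.Ioo 0 T → η t = 0) →
      ∫ t in (0 : ℝ)..T, (deriv η t * p t + η t * q t) = 0) :
    ∀ t ∈ Set.Icc 0 T, p t = p 0 + ∫ s in (0 : ℝ)..t, q s := by
  set r : ℝ → ℝ := fun t => p t - ∫ s in (0 : ℝ)..t, q s with hr
  have hQ : ∀ t, HasDerivAt (fun t => ∫ s in (0 : ℝ)..t, q s) (q t) t := fun t =>
    intervalIntegral.integral_hasDerivAt_right (hq.intervalIntegrable _ _)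
      (hq.stronglyMeasurableAtFilter _ _) hq.continuousAt
  have hQc : Continuous fun t => ∫ s in (0 : ℝ)..t, q s :=
    continuous_iff_continuousAt.2 fun t => (hQ t).continuousAt
  have hrc : Continuous r := hp.sub hQc
  have hweak : ∀ η : ℝ → ℝ, ContDiff ℝ (⊤ : ℕ∞) η → (∀ t, t ∉ Set.Ioo 0 T → η t = 0) →
      ∫ t in (0 : ℝ)..T, deriv η t * r t = 0 := by
    intro η hη hη0
    have hη' : Continuous (deriv η) := hη.continuous_deriv (by simp)
    have h1 := h η hη hη0
    have h2 : ∫ t in (0 : ℝ)..T, (deriv η t * (∫ s in (0 : ℝ)..t, q s) + η t * q t) = 0 := by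
      rw [intervalIntegral.integral_eq_sub_of_hasDerivAt
        (f := fun t => η t * ∫ s in (0 : ℝ)..t, q s)
        (fun t _ => ((hη.differentiable (by simp)) t).hasDerivAt.mul (hQ t))
        (Continuous.intervalIntegrable (by fun_prop) _ _)]
      simp [hη0 T (by simp)]
    have h3 : ∀ t, deriv η t * r t = (deriv η t * p t + η t * q t) -
        (deriv η t * (∫ s in (0 : ℝ)..t, q s) + η t * q t) := fun t => by simp only [hr]; ring
    simp only [h3]
    rw [intervalIntegral.integral_sub (Continuous.intervalIntegrable (by fun_prop) _ _)
      (Continuous.intervalIntegrable (by fun_prop) _ _), h1, h2, sub_zero]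
  let B : ContDiffBump (T / 2) := ⟨T / 8, T / 4, by linarith, by linarith⟩
  set θ : ℝ → ℝ := B.normed MeasureTheory.volume with hθ
  have hθs : ContDiff ℝ (⊤ : ℕ∞) θ := B.contDiff_normed
  have hθ0 : ∀ t, t ∉ Set.Ioo 0 T → θ t = 0 := by
    intro t ht
    by_contra hne
    have : t ∈ Function.support θ := hne
    rw [hθ, B.support_normed_eq] at this
    rw [Metric.mem_ball, Real.dist_eq, abs_lt] at this
    have hB : B.rOut = T / 4 := rfl
    rw [hB] at this
    exact ht ⟨by linarith [this.1], by linarith [this.2]⟩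
  have whole : ∀ f : ℝ → ℝ, (∀ t, t ∉ Set.Ioo 0 T → f t = 0) →
      ∫ t in (0 : ℝ)..T, f t = ∫ t, f t := fun f hf =>
    intervalIntegral.integral_eq_integral_of_support_subset fun t ht =>
      Set.Ioo_subset_Ioc_self (by_contra fun h' => ht (hf t h'))
  have hθ1 : ∫ t in (0 : ℝ)..T, θ t = 1 := by
    rw [whole θ hθ0]
    exact B.integral_normed
  set m := ∫ t in (0 : ℝ)..T, θ t * r t with hm
  have hae : ∀ᵐ t, t ∈ Set.Ioo 0 T → r t - m = 0 := by
    refine isOpen_Ioo.ae_eq_zero_of_integral_contDiff_smul_eq_zero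
      ((hrc.sub continuous_const).locallyIntegrable.locallyIntegrableOn _) ?_
    intro g hg _ hgs
    have hg0 : ∀ t, t ∉ Set.Ioo 0 T → g t = 0 := fun t ht =>
      image_eq_zero_of_notMem_tsupport fun h' => ht (hgs h')
    set n := ∫ t in (0 : ℝ)..T, g t with hn
    set f : ℝ → ℝ := fun t => g t - n * θ t with hf
    have hfs : ContDiff ℝ (⊤ : ℕ∞) f := hg.sub (contDiff_const.mul hθs)
    have hf0 : ∀ t, t ∉ Set.Ioo 0 T → f t = 0 := fun t ht => by simp [hf, hg0 t ht, hθ0 t ht]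
    have hgc := hg.continuous
    have hθc := hθs.continuous
    have hfc := hfs.continuous
    have hfint : ∫ t in (0 : ℝ)..T, f t = 0 := by
      simp only [hf]
      rw [intervalIntegral.integral_sub (hgc.intervalIntegrable _ _)
        (Continuous.intervalIntegrable (by fun_prop) _ _),
        intervalIntegral.integral_const_mul, hθ1, mul_one, sub_self]
    have hη : ∀ t, HasDerivAt (fun t => ∫ s in (0 : ℝ)..t, f s) (f t) t := fun t =>
      intervalIntegral.integral_hasDerivAt_right (hfc.intervalIntegrable _ _)
        (hfc.stronglyMeasurableAtFilter _ _) hfc.continuousAt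
    have hηd : deriv (fun t => ∫ s in (0 : ℝ)..t, f s) = f := funext fun t => (hη t).deriv
    have key := hweak (fun t => ∫ s in (0 : ℝ)..t, f s)
      (contDiff_infty_iff_deriv.2 ⟨fun t => (hη t).differentiableAt, by rwa [hηd]⟩) ?_
    · rw [hηd] at key
      have h4 : ∀ t, g t • (r t - m) = (f t * r t + n * (θ t * r t)) - m * g t := fun t => by
        simp only [hf, smul_eq_mul]; ring
      rw [← whole _ fun t ht => by simp [hg0 t ht]]
      simp only [h4]
      rw [intervalIntegral.integral_sub (Continuous.intervalIntegrable (by fun_prop) _ _)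
        (Continuous.intervalIntegrable (by fun_prop) _ _),
        intervalIntegral.integral_add (Continuous.intervalIntegrable (by fun_prop) _ _)
        (Continuous.intervalIntegrable (by fun_prop) _ _), key,
        intervalIntegral.integral_const_mul, intervalIntegral.integral_const_mul, ← hm, ← hn]
      ring
    · intro t ht
      rcases le_or_gt t 0 with h0 | h0
      · refine (intervalIntegral.integral_congr (g := fun _ => (0 : ℝ)) fun s hs => ?_).trans
          (by simp)
        rw [Set.uIcc_of_ge h0] at hs
        exact hf0 s fun h' => absurd h'.1 (not_lt.2 hs.2)
      · have hTt : T ≤ t := not_lt.1 fun h' => ht ⟨h0, h'⟩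
        rw [← intervalIntegral.integral_add_adjacent_intervals (b := T)
          (hfc.intervalIntegrable _ _) (hfc.intervalIntegrable _ _), hfint, zero_add]
        refine (intervalIntegral.integral_congr (g := fun _ => (0 : ℝ)) fun s hs => ?_).trans
          (by simp)
        rw [Set.uIcc_of_le hTt] at hs
        exact hf0 s fun h' => absurd h'.2 (not_lt.2 hs.1)
  have hopen : Set.EqOn r (fun _ => m) (Set.Ioo 0 T) := by
    refine MeasureTheory.Measure.eqOn_open_of_ae_eq (μ := MeasureTheory.volume) ?_ isOpen_Ioo
      hrc.continuousOn continuousOn_const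
    rw [Filter.EventuallyEq, MeasureTheory.ae_restrict_iff' measurableSet_Ioo]
    filter_upwards [hae] with t ht h'
    linarith [ht h']
  have hclosed : Set.EqOn r (fun _ => m) (Set.Icc 0 T) := by
    have := hopen.closure hrc continuous_const
    rwa [closure_Ioo hT.ne] at this
  intro t ht
  have h5 := hclosed ht
  have h6 := hclosed ⟨le_rfl, hT.le⟩
  simp only [hr, intervalIntegral.integral_same, sub_zero] at h5 h6
  linarith

/-! ### The equation holds pointwise -/

section

variable {γ0 γ1 γ2 : ℝ} {j0 : ℕ} {lam : Fin j0 → ℝ} {a b c d : Fin j0 → ℕ}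

/-- The time derivative prescribed by the equation. -/
noncomputable def rhs (γ0 γ1 γ2 : ℝ) (j0 : ℕ) (lam : Fin j0 → ℝ) (a b c d : Fin j0 → ℕ)
    (u : ℝ → ℝ → ℝ) (t x : ℝ) : ℝ :=
  Nfun j0 lam a b c d (u t) x -
    (γ0 * dx^[5] u t x + γ1 * dx^[3] u t x + γ2 * dx^[1] u t x)

lemma Nfun_eq (u : ℝ → ℝ → ℝ) (t x : ℝ) :
    Nfun j0 lam a b c d (u t) x = ∑ j, lam j * (dx^[3] u t x) ^ a j * (dx^[2] u t x) ^ b j *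
      (dx^[1] u t x) ^ c j * (dx^[0] u t x) ^ d j := by
  simp only [Nfun, dx_iterate_eq, iteratedDeriv_one, iteratedDeriv_zero]

lemma reg_Nfun {u : ℝ → ℝ → ℝ} (hu : Reg 10 u) :
    Reg 7 (fun t x => Nfun j0 lam a b c d (u t) x) := by
  simp only [Nfun_eq]
  have h : ∀ i ≤ 3, Reg 7 (dx^[i] u) := fun i hi => hu.dx_iterate (by omega)
  exact Reg.sum _ fun j _ => (((((h 3 le_rfl).pow _).const_mul _).mul ((h 2 (by norm_num)).pow _)).mul
    ((h 1 (by norm_num)).pow _)).mul ((h 0 (by norm_num)).pow _)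

lemma reg_rhs {u : ℝ → ℝ → ℝ} (hu : Reg 10 u) : Reg 5 (rhs γ0 γ1 γ2 j0 lam a b c d u) := by
  have h : ∀ i ≤ 5, Reg 5 (dx^[i] u) := fun i hi => hu.dx_iterate (by omega)
  exact ((reg_Nfun hu).mono (by norm_num)).sub
    ((((h 5 le_rfl).const_mul γ0).add ((h 3 (by norm_num)).const_mul γ1)).add
      ((h 1 (by norm_num)).const_mul γ2))

lemma integral_deriv_eq_zero {Q Q' : ℝ → ℝ} (hQ : ∀ x, HasDerivAt Q (Q' x) x)
    (hQ' : Continuous Q') (hp : Function.Periodic Q (2 * Real.pi)) :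
    ∫ x in (0 : ℝ)..(2 * Real.pi), Q' x = 0 := by
  rw [intervalIntegral.integral_eq_sub_of_hasDerivAt (fun x _ => hQ x)
    (hQ'.intervalIntegrable _ _), ← hp 0, zero_add, sub_self]

lemma periodic_deriv {χ : ℝ → ℝ} (hp : Function.Periodic χ (2 * Real.pi)) :
    Function.Periodic (deriv χ) (2 * Real.pi) := by
  intro x
  rw [← deriv_comp_add_const]
  congr 1
  exact funext hp

lemma periodic_iteratedDeriv {χ : ℝ → ℝ} (hp : Function.Periodic χ (2 * Real.pi)) (n : ℕ) :
    Function.Periodic (iteratedDeriv n χ) (2 * Real.pi) := by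
  induction n with
  | zero => simpa using hp
  | succ n ih =>
    rw [iteratedDeriv_succ]
    exact periodic_deriv ih

lemma hasDerivAt_iteratedDeriv {χ : ℝ → ℝ} (hχ : ContDiff ℝ (⊤ : ℕ∞) χ) (n : ℕ) (x : ℝ) :
    HasDerivAt (iteratedDeriv n χ) (iteratedDeriv (n + 1) χ x) x := by
  rw [iteratedDeriv_succ]
  exact (hχ.differentiable_iteratedDeriv n (by exact_mod_cast WithTop.coe_lt_top _) x).hasDerivAt

lemma integral_by_parts {u : ℝ → ℝ → ℝ} (hu : Reg 10 u) {χ : ℝ → ℝ}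
    (hχ : ContDiff ℝ (⊤ : ℕ∞) χ) (hχp : Function.Periodic χ (2 * Real.pi)) (t : ℝ) :
    ∫ x in (0 : ℝ)..(2 * Real.pi), (u t x * (γ0 * iteratedDeriv 5 χ x
        + γ1 * iteratedDeriv 3 χ x + γ2 * deriv χ x) + Nfun j0 lam a b c d (u t) x * χ x) =
      ∫ x in (0 : ℝ)..(2 * Real.pi), rhs γ0 γ1 γ2 j0 lam a b c d u t x * χ x := by
  have hU : ∀ i ≤ 5, ∀ x, HasDerivAt (dx^[i] u t) (dx^[i + 1] u t x) x := fun i hi x => by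
    rw [Function.iterate_succ_apply']
    exact (hu.dx_iterate (j := 1) (by omega)).hasDerivAt t x
  have hUc : ∀ i ≤ 5, Continuous (dx^[i] u t) := fun i hi =>
    (hu.dx_iterate (j := 0) (by omega)).contx t
  have hUp : ∀ i ≤ 5, Function.Periodic (dx^[i] u t) (2 * Real.pi) := fun i hi =>
    (hu.dx_iterate (j := 0) (by omega)).per t
  have hX := hasDerivAt_iteratedDeriv hχ
  have hXp := periodic_iteratedDeriv hχp
  have hXc : ∀ n, Continuous (iteratedDeriv n χ) := fun n =>
    continuous_iff_continuousAt.2 fun x => (hX n x).continuousAt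
  have hNc : Continuous fun x => Nfun j0 lam a b c d (u t) x :=
    (reg_Nfun (lam := lam) (a := a) (b := b) (c := c) (d := d) hu).contx t
  have h0 := hUc 0 (by norm_num)
  have h1 := hUc 1 (by norm_num)
  have h2 := hUc 2 (by norm_num)
  have h3 := hUc 3 (by norm_num)
  have h4 := hUc 4 (by norm_num)
  have h5 := hUc 5 (by norm_num)
  have X0 := hXc 0
  have X1 := hXc 1
  have X2 := hXc 2
  have X3 := hXc 3
  have X4 := hXc 4
  have X5 := hXc 5
  have e0 : u t = dx^[0] u t := rfl
  have f0 : χ = iteratedDeriv 0 χ := iteratedDeriv_zero.symm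
  have f1 : deriv χ = iteratedDeriv 1 χ := iteratedDeriv_one.symm
  have key := integral_deriv_eq_zero (Q := fun x =>
      γ0 * (dx^[0] u t x * iteratedDeriv 4 χ x - dx^[1] u t x * iteratedDeriv 3 χ x
        + dx^[2] u t x * iteratedDeriv 2 χ x - dx^[3] u t x * iteratedDeriv 1 χ x
        + dx^[4] u t x * iteratedDeriv 0 χ x)
      + γ1 * (dx^[0] u t x * iteratedDeriv 2 χ x - dx^[1] u t x * iteratedDeriv 1 χ x
        + dx^[2] u t x * iteratedDeriv 0 χ x)
      + γ2 * (dx^[0] u t x * iteratedDeriv 0 χ x))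
    (Q' := fun x =>
      (dx^[0] u t x * (γ0 * iteratedDeriv 5 χ x
        + γ1 * iteratedDeriv 3 χ x + γ2 * iteratedDeriv 1 χ x)
        + Nfun j0 lam a b c d (u t) x * iteratedDeriv 0 χ x) -
      rhs γ0 γ1 γ2 j0 lam a b c d u t x * iteratedDeriv 0 χ x) ?_ ?_ ?_
  · rw [intervalIntegral.integral_sub] at key
    · rw [e0, f1]
      conv_lhs =>
        enter [1, x, 2, 2]
        rw [f0]
      conv_rhs =>
        enter [1, x, 2]
        rw [f0]
      exact sub_eq_zero.1 key
    · exact Continuous.intervalIntegrable (by fun_prop) _ _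
    · simp only [rhs]
      exact Continuous.intervalIntegrable (by fun_prop) _ _
  · intro x
    have D := fun i (hi : i ≤ 4) n => (hU i (by omega) x).mul (hX n x)
    refine (((((((D 0 (by norm_num) 4).sub (D 1 (by norm_num) 3)).add (D 2 (by norm_num) 2)).sub
      (D 3 (by norm_num) 1)).add (D 4 (by norm_num) 0)).const_mul γ0).add
      ((((D 0 (by norm_num) 2).sub (D 1 (by norm_num) 1)).add (D 2 (by norm_num) 0)).const_mul γ1)
      |>.add ((D 0 (by norm_num) 0).const_mul γ2)).congr_deriv ?_
    simp only [rhs]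
    ring
  · simp only [rhs]
    fun_prop
  · intro x
    have P := fun i (hi : i ≤ 5) => hUp i hi x
    simp only [hXp _ x, P 0 (by norm_num), P 1 (by norm_num), P 2 (by norm_num), P 3 (by norm_num),
      P 4 (by norm_num)]

lemma IsSolution.weak {T M : ℝ} (hT : 0 < T) {u : ℝ → ℝ → ℝ}
    (hsol : IsSolution γ0 γ1 γ2 j0 lam a b c d 0 T u)
    (hu : Tame M fun t => u (clamp T t)) {χ : ℝ → ℝ}
    (hχ : ContDiff ℝ (⊤ : ℕ∞) χ) (hχp : Function.Periodic χ (2 * Real.pi)) :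
    ∀ t ∈ Set.Icc 0 T, ∫ x in (0 : ℝ)..(2 * Real.pi), u (clamp T t) x * χ x =
      (∫ x in (0 : ℝ)..(2 * Real.pi), u (clamp T 0) x * χ x) +
      ∫ s in (0 : ℝ)..t, ∫ x in (0 : ℝ)..(2 * Real.pi),
        rhs γ0 γ1 γ2 j0 lam a b c d (fun t => u (clamp T t)) s x * χ x := by
  set v : ℝ → ℝ → ℝ := fun t => u (clamp T t) with hv
  have hr := hu.reg
  have hχc := hχ.continuous
  have hFc := (reg_rhs (γ0 := γ0) (γ1 := γ1) (γ2 := γ2) (lam := lam) (a := a) (b := b) (c := c)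
    (d := d) hr).cont
  have hvc := hr.cont
  refine eq_primitive_of_weak hT
    (p := fun t => ∫ x in (0 : ℝ)..(2 * Real.pi), v t x * χ x)
    (q := fun s => ∫ x in (0 : ℝ)..(2 * Real.pi), rhs γ0 γ1 γ2 j0 lam a b c d v s x * χ x)
    (continuous_param (g := fun t x => v t x * χ x) (hvc.mul (hχc.comp continuous_snd)) _ _)
    (continuous_param (g := fun s x => rhs γ0 γ1 γ2 j0 lam a b c d v s x * χ x)
      (hFc.mul (hχc.comp continuous_snd)) _ _) fun η hη hη0 => ?_
  have h := hsol.2 (fun t x => η t * χ x) ?_ (fun t x => by simp only [hχp x])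
    (fun t ht x => by simp [hη0 t ht])
  · refine Eq.trans (intervalIntegral.integral_congr fun t ht => ?_) h
    rw [Set.uIcc_of_le hT.le] at ht
    have hvt : u t = v t := by rw [hv]; simp only [clamp_of_mem ht]
    have hχn : ∀ n : ℕ, ∀ x, ContDiffAt ℝ n χ x := fun n x =>
      (hχ.of_le (by exact_mod_cast le_top)).contDiffAt
    have hc1 : ∀ x, deriv (fun x => η t * χ x) x = η t * deriv χ x := fun x =>
      deriv_const_mul _ ((hχ.differentiable (by simp)) x)
    have hc2 : ∀ x, deriv (fun τ => η τ * χ x) t = deriv η t * χ x := fun x =>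
      deriv_mul_const ((hη.differentiable (by simp)) t) _
    have hcn : ∀ n : ℕ, ∀ x, iteratedDeriv n (fun x => η t * χ x) x = η t * iteratedDeriv n χ x :=
      fun n x => iteratedDeriv_const_mul _ (hχn n x)
    simp only [hc1, hc2, hcn, hvt]
    rw [← integral_by_parts hr hχ hχp t, ← intervalIntegral.integral_const_mul,
      ← intervalIntegral.integral_const_mul, ← intervalIntegral.integral_add]
    · refine intervalIntegral.integral_congr fun x _ => ?_
      ring
    · exact (continuous_const.mul ((hr.contx t).mul hχc)).intervalIntegrable _ _
    · have hNc : Continuous fun x => Nfun j0 lam a b c d (v t) x :=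
        (reg_Nfun (lam := lam) (a := a) (b := b) (c := c) (d := d) hr).contx t
      have hvt := hr.contx t
      have X1 : Continuous (deriv χ) := hχ.continuous_deriv (by simp)
      have Xn : ∀ n : ℕ, Continuous (iteratedDeriv n χ) := fun n =>
        hχ.continuous_iteratedDeriv n (by exact_mod_cast le_top)
      have X3 := Xn 3
      have X5 := Xn 5
      exact Continuous.intervalIntegrable (by fun_prop) _ _
  · exact (hη.comp contDiff_fst).mul (hχ.comp contDiff_snd)

lemma fc_eq_cos_sin {g : ℝ → ℝ} (hg : Continuous g) (k : ℤ) :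
    fc g k = (Complex.ofReal (2 * Real.pi))⁻¹ *
      (((∫ x in (0 : ℝ)..(2 * Real.pi), g x * Real.cos (k * x) : ℝ) : ℂ) -
        ((∫ x in (0 : ℝ)..(2 * Real.pi), g x * Real.sin (k * x) : ℝ) : ℂ) * Complex.I) := by
  rw [fc, ← intervalIntegral.integral_ofReal, ← intervalIntegral.integral_ofReal,
    ← intervalIntegral.integral_mul_const, ← intervalIntegral.integral_sub]
  · congr 1
    refine intervalIntegral.integral_congr fun x _ => ?_
    have : -Complex.I * (k : ℂ) * (x : ℂ) = ((-(k * x) : ℝ) : ℂ) * Complex.I := by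
      push_cast; ring
    simp only [this, Complex.exp_mul_I, ← Complex.ofReal_cos, ← Complex.ofReal_sin, Real.cos_neg,
      Real.sin_neg]
    push_cast
    ring
  · exact Continuous.intervalIntegrable (by fun_prop) _ _
  · exact Continuous.intervalIntegrable (by fun_prop) _ _

lemma eq_zero_of_orthogonal {g : ℝ → ℝ} (hg : Continuous g)
    (hp : Function.Periodic g (2 * Real.pi))
    (h : ∀ χ : ℝ → ℝ, ContDiff ℝ (⊤ : ℕ∞) χ → Function.Periodic χ (2 * Real.pi) →
      ∫ x in (0 : ℝ)..(2 * Real.pi), g x * χ x = 0) (x : ℝ) : g x = 0 := by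
  have hk : ∀ k, fc g k = 0 := by
    intro k
    rw [fc_eq_cos_sin hg, h (fun x => Real.cos (k * x)) (by fun_prop) fun x => ?_,
      h (fun x => Real.sin (k * x)) (by fun_prop) fun x => ?_]
    · simp
    · simp only [mul_add, Real.sin_add_int_mul_two_pi]
    · simp only [mul_add, Real.cos_add_int_mul_two_pi]
  have hs := hasSum_fc hg hp (by simp only [hk]; exact summable_zero) x
  simp only [hk, zero_mul] at hs
  exact_mod_cast hs.unique hasSum_zero

lemma TInt.of_weak {T : ℝ} {k l : ℕ} {v F : ℝ → ℝ → ℝ} (hr : Reg k v) (hF : Reg l F)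
    (hweak : ∀ χ : ℝ → ℝ, ContDiff ℝ (⊤ : ℕ∞) χ → Function.Periodic χ (2 * Real.pi) →
      ∀ t ∈ Set.Icc 0 T, ∫ x in (0 : ℝ)..(2 * Real.pi), v t x * χ x =
        (∫ x in (0 : ℝ)..(2 * Real.pi), v 0 x * χ x) +
        ∫ s in (0 : ℝ)..t, ∫ x in (0 : ℝ)..(2 * Real.pi), F s x * χ x) :
    TInt T v F := by
  intro t ht x
  have hIc : Continuous fun x => ∫ s in (0 : ℝ)..t, F s x :=
    continuous_param (g := fun x s => F s x) (hF.cont.comp continuous_swap) 0 t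
  have hvt := hr.contx t
  have hv0 := hr.contx 0
  have key := eq_zero_of_orthogonal (g := fun x => v t x - v 0 x - ∫ s in (0 : ℝ)..t, F s x)
    ((hvt.sub hv0).sub hIc) (fun y => by simp only [hr.per _ y, hF.per _ y])
    (fun χ hχ hχp => ?_) x
  · linarith
  · have hχc := hχ.continuous
    have e : ∀ y, (v t y - v 0 y - ∫ s in (0 : ℝ)..t, F s y) * χ y =
        v t y * χ y - v 0 y * χ y - ∫ s in (0 : ℝ)..t, F s y * χ y := fun y => by
      rw [intervalIntegral.integral_mul_const]; ring
    have hI : Continuous fun y => ∫ s in (0 : ℝ)..t, F s y * χ y := by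
      simp only [intervalIntegral.integral_mul_const]
      exact hIc.mul hχc
    simp only [e]
    have ht' : Continuous fun y => v t y * χ y := hvt.mul hχc
    have h0' : Continuous fun y => v 0 y * χ y := hv0.mul hχc
    have hd' : Continuous fun y => v t y * χ y - v 0 y * χ y := ht'.sub h0'
    rw [intervalIntegral.integral_sub (hd'.intervalIntegrable _ _) (hI.intervalIntegrable _ _),
      intervalIntegral.integral_sub (ht'.intervalIntegrable _ _) (h0'.intervalIntegrable _ _),
      ← integral_swap (g := fun s y => F s y * χ y) (hF.cont.mul (hχc.comp continuous_snd)),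
      hweak χ hχ hχp t ht]
    ring

lemma IsSolution.tInt {T M : ℝ} (hT : 0 < T) {u : ℝ → ℝ → ℝ}
    (hsol : IsSolution γ0 γ1 γ2 j0 lam a b c d 0 T u)
    (hu : Tame M fun t => u (clamp T t)) :
    TInt T (fun t => u (clamp T t))
      (rhs γ0 γ1 γ2 j0 lam a b c d fun t => u (clamp T t)) :=
  TInt.of_weak hu.reg (reg_rhs hu.reg) fun _ hχ hχp => hsol.weak hT hu hχ hχp

end

/-! ### Interpolation -/

lemma fc_sq_le {f : ℝ → ℝ} (hf : Continuous f) (k : ℤ) :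
    ‖fc f k‖ ^ 2 ≤ ∫ x in (0 : ℝ)..(2 * Real.pi), f x ^ 2 := by
  have hpi := Real.two_pi_pos
  have hpi3 := Real.pi_gt_three
  set m : ℝ := (2 * Real.pi)⁻¹ * ∫ x in (0 : ℝ)..(2 * Real.pi), |f x| with hm
  have hm0 : 0 ≤ m := mul_nonneg (by positivity)
    (intervalIntegral.integral_nonneg hpi.le fun x _ => abs_nonneg _)
  have hI : ∫ x in (0 : ℝ)..(2 * Real.pi), |f x| = 2 * Real.pi * m := by
    rw [hm]; field_simp
  have h1 : ‖fc f k‖ ≤ m := by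
    rw [fc, norm_mul, hm, norm_inv, Complex.norm_real, Real.norm_of_nonneg hpi.le]
    refine mul_le_mul_of_nonneg_left ?_ (by positivity)
    refine (intervalIntegral.norm_integral_le_integral_norm hpi.le).trans (le_of_eq ?_)
    refine intervalIntegral.integral_congr fun x _ => ?_
    have : ‖Complex.exp (-Complex.I * (k : ℂ) * (x : ℂ))‖ = 1 := by
      rw [Complex.norm_exp]; simp
    rw [norm_mul, this, mul_one, Complex.norm_real, Real.norm_eq_abs]
  have h2 : 0 ≤ ∫ x in (0 : ℝ)..(2 * Real.pi), (|f x| - m) ^ 2 :=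
    intervalIntegral.integral_nonneg hpi.le fun x _ => sq_nonneg _
  have h3 : ∫ x in (0 : ℝ)..(2 * Real.pi), (|f x| - m) ^ 2 =
      (∫ x in (0 : ℝ)..(2 * Real.pi), f x ^ 2) - 2 * Real.pi * m ^ 2 := by
    have e : ∀ x, (|f x| - m) ^ 2 = f x ^ 2 - 2 * m * |f x| + m ^ 2 := fun x => by
      rw [sub_sq, sq_abs]; ring
    simp only [e]
    rw [intervalIntegral.integral_add (Continuous.intervalIntegrable (by fun_prop) _ _)
      (Continuous.intervalIntegrable (by fun_prop) _ _),
      intervalIntegral.integral_sub (Continuous.intervalIntegrable (by fun_prop) _ _)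
      (Continuous.intervalIntegrable (by fun_prop) _ _), intervalIntegral.integral_const_mul, hI,
      intervalIntegral.integral_const, smul_eq_mul]
    ring
  have h4 : ‖fc f k‖ ^ 2 ≤ m ^ 2 := pow_le_pow_left₀ (norm_nonneg _) h1 2
  nlinarith [sq_nonneg m]

lemma fc_deriv {f f' : ℝ → ℝ} (hf : ∀ x, HasDerivAt f (f' x) x) (hf' : Continuous f')
    (hp : Function.Periodic f (2 * Real.pi)) (k : ℤ) : fc f' k = Complex.I * k * fc f k := by
  have hfc : Continuous f := continuous_iff_continuousAt.2 fun x => (hf x).continuousAt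
  have hE : ∀ x : ℝ, HasDerivAt (fun x : ℝ => Complex.exp (-Complex.I * (k : ℂ) * (x : ℂ)))
      (Complex.exp (-Complex.I * (k : ℂ) * (x : ℂ)) * (-Complex.I * k)) x := fun x => by
    have := ((hasDerivAt_id (x : ℂ)).const_mul (-Complex.I * (k : ℂ))).cexp.comp_ofReal
    simpa using this
  have hd : ∀ x : ℝ, HasDerivAt (fun x : ℝ => (f x : ℂ) *
      Complex.exp (-Complex.I * (k : ℂ) * (x : ℂ)))
      ((f' x : ℂ) * Complex.exp (-Complex.I * (k : ℂ) * (x : ℂ)) - Complex.I * k *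
        ((f x : ℂ) * Complex.exp (-Complex.I * (k : ℂ) * (x : ℂ)))) x := fun x =>
    ((hf x).ofReal_comp.mul (hE x)).congr_deriv (by ring)
  have h := intervalIntegral.integral_eq_sub_of_hasDerivAt (a := 0) (b := 2 * Real.pi)
    (fun x _ => hd x) (((fc_integrable hf' k _ _)).sub
      ((fc_integrable hfc k _ _).const_mul _))
  have hexp : Complex.exp (-Complex.I * (k : ℂ) * ((2 * Real.pi : ℝ) : ℂ)) = 1 := by
    have : -Complex.I * (k : ℂ) * ((2 * Real.pi : ℝ) : ℂ) =
        ((-k : ℤ) : ℂ) * (2 * Real.pi * Complex.I) := by push_cast; ring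
    rw [this, Complex.exp_int_mul_two_pi_mul_I]
  have hp0 : f (2 * Real.pi) = f 0 := by simpa using hp 0
  rw [intervalIntegral.integral_sub (fc_integrable hf' k _ _)
    ((fc_integrable hfc k _ _).const_mul _), intervalIntegral.integral_const_mul, hexp, hp0] at h
  simp only [Complex.ofReal_zero, mul_zero, Complex.exp_zero, mul_one, sub_self] at h
  rw [fc, fc, sub_eq_zero.1 h]
  ring

/-- The squared `H¹` norm (up to normalisation). -/
noncomputable def energy (u : ℝ → ℝ → ℝ) (t : ℝ) : ℝ :=
  ∫ y in (0 : ℝ)..(2 * Real.pi), ((dx^[0] u t y) ^ 2 + (dx^[1] u t y) ^ 2)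

lemma energy_nonneg (u : ℝ → ℝ → ℝ) (t : ℝ) : 0 ≤ energy u t :=
  intervalIntegral.integral_nonneg Real.two_pi_pos.le fun x _ => by positivity

lemma Tame.coef_cube {M : ℝ} {u : ℝ → ℝ → ℝ} (h : Tame M u) (t : ℝ) (k : ℤ) :
    ‖fc (u t) k‖ ^ 3 ≤ M * energy u t / (1 + (k : ℝ) ^ 2) ^ 7 := by
  have hk : (0 : ℝ) < 1 + (k : ℝ) ^ 2 := by positivity
  have hr := h.reg
  have h1 : (1 + (k : ℝ) ^ 2) * ‖fc (u t) k‖ ^ 2 ≤ energy u t := by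
    have hd := fc_deriv (f := u t) (f' := dx u t) (fun x => hr.hasDerivAt t x)
      (hr.2.2.contx t) (hr.per t) k
    have i0 := fc_sq_le (hr.contx t) k
    have i1 := fc_sq_le (hr.2.2.contx t) k
    rw [hd, norm_mul, norm_mul, Complex.norm_I, one_mul, Complex.norm_intCast, mul_pow,
      sq_abs] at i1
    have c0 := hr.contx t
    have c1 := hr.2.2.contx t
    have : energy u t = (∫ x in (0 : ℝ)..(2 * Real.pi), u t x ^ 2) +
        ∫ x in (0 : ℝ)..(2 * Real.pi), dx u t x ^ 2 := by
      exact intervalIntegral.integral_add ((c0.pow 2).intervalIntegrable _ _)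
        ((c1.pow 2).intervalIntegrable _ _)
    linarith
  have h2 := h.coef_bound t k
  rw [le_div_iff₀ (by positivity)] at h2 ⊢
  have := mul_le_mul h2 h1 (by positivity) ((by positivity : (0 : ℝ) ≤ _).trans h2)
  calc _ = _ := by ring
    _ ≤ _ := this

lemma Tame.interpolation {M : ℝ} {u : ℝ → ℝ → ℝ} (h : Tame M u) :
    ∃ C, 0 ≤ C ∧ ∀ t x, ∀ i ≤ 3, |dx^[i] u t x| ^ 3 ≤ C * energy u t := by
  have hM : 0 ≤ M := by
    have := (norm_nonneg _).trans (h.coef_bound 0 0)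
    simpa using this
  have hS := summable_one_add_sq_rpow (p := 5 / 6) (by norm_num)
  set S := ∑' k : ℤ, (1 + (k : ℝ) ^ 2) ^ (-(5 / 6) : ℝ) with hSdef
  have hS0 : 0 ≤ S := tsum_nonneg fun k => by positivity
  refine ⟨M * S ^ 3, by positivity, fun t x i hi => ?_⟩
  have hE : 0 ≤ M * energy u t := mul_nonneg hM (energy_nonneg u t)
  set r : ℝ := (M * energy u t) ^ (1 / 3 : ℝ) with hr
  have hr0 : 0 ≤ r := by positivity
  have hr3 : r ^ 3 = M * energy u t := by
    rw [hr, ← Real.rpow_natCast, ← Real.rpow_mul hE]; norm_num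
  have hterm : ∀ k : ℤ, ‖(Complex.I * k) ^ i * fc (u t) k * Complex.exp (Complex.I * k * x)‖ ≤
      r * (1 + (k : ℝ) ^ 2) ^ (-(5 / 6) : ℝ) := by
    intro k
    have hk : (0 : ℝ) < 1 + (k : ℝ) ^ 2 := by positivity
    have hk1 : (1 : ℝ) ≤ 1 + (k : ℝ) ^ 2 := by nlinarith [sq_nonneg (k : ℝ)]
    rw [norm_term, norm_mul, norm_pow, norm_mul, Complex.norm_I, one_mul, Complex.norm_intCast]
    have e1 : ‖fc (u t) k‖ ≤ r * (1 + (k : ℝ) ^ 2) ^ (-(7 / 3) : ℝ) := by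
      refine le_of_pow_le_pow_left₀ (n := 3) (by norm_num) (by positivity) ?_
      refine (h.coef_cube t k).trans (le_of_eq ?_)
      rw [mul_pow, hr3, div_eq_mul_inv, ← Real.rpow_natCast (_ ^ (-(7 / 3) : ℝ)),
        ← Real.rpow_mul hk.le, ← Real.rpow_natCast, ← Real.rpow_neg hk.le]
      norm_num
    have e2 : |(k : ℝ)| ^ i ≤ (1 + (k : ℝ) ^ 2) ^ (3 / 2 : ℝ) := by
      have a1 : |(k : ℝ)| ≤ (1 + (k : ℝ) ^ 2) ^ (1 / 2 : ℝ) := by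
        rw [← Real.sqrt_eq_rpow]
        exact Real.abs_le_sqrt (by linarith)
      calc |(k : ℝ)| ^ i ≤ ((1 + (k : ℝ) ^ 2) ^ (1 / 2 : ℝ)) ^ i :=
            pow_le_pow_left₀ (abs_nonneg _) a1 i
        _ ≤ ((1 + (k : ℝ) ^ 2) ^ (1 / 2 : ℝ)) ^ 3 :=
            pow_le_pow_right₀ (Real.one_le_rpow hk1 (by norm_num)) hi
        _ = _ := by
          rw [← Real.rpow_natCast, ← Real.rpow_mul hk.le]; norm_num
    calc |(k : ℝ)| ^ i * ‖fc (u t) k‖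
        ≤ (1 + (k : ℝ) ^ 2) ^ (3 / 2 : ℝ) * (r * (1 + (k : ℝ) ^ 2) ^ (-(7 / 3) : ℝ)) :=
          mul_le_mul e2 e1 (norm_nonneg _) (by positivity)
      _ = r * ((1 + (k : ℝ) ^ 2) ^ (3 / 2 : ℝ) * (1 + (k : ℝ) ^ 2) ^ (-(7 / 3) : ℝ)) := by ring
      _ = _ := by
        rw [← Real.rpow_add hk]; norm_num
  have hb : |dx^[i] u t x| ≤ r * S := by
    rw [h.dx_eq (by omega), series, hSdef, ← tsum_mul_left]
    refine (Complex.abs_re_le_norm _).trans ?_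
    exact tsum_of_norm_bounded (hS.mul_left r).hasSum hterm
  calc _ ≤ (r * S) ^ 3 := pow_le_pow_left₀ (abs_nonneg _) hb 3
    _ = _ := by rw [mul_pow, hr3]; ring

lemma Tame.sub {M N : ℝ} {u v : ℝ → ℝ → ℝ} (hu : Tame M u) (hv : Tame N v) :
    Tame (M + N) fun t x => u t x - v t x := by
  have e := fun t k => fc_sub (hu.cont t) (hv.cont t) k
  refine ⟨fun t => (hu.cont t).sub (hv.cont t), fun t => (hu.per t).sub (hv.per t), fun k => ?_,
    fun t k => ?_⟩
  · simp only [e]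
    exact (hu.coef_cont k).sub (hv.coef_cont k)
  · rw [e, add_div]
    exact (norm_sub_le _ _).trans (add_le_add (hu.coef_bound t k) (hv.coef_bound t k))

lemma dx_iterate_sub {n i : ℕ} {u v : ℝ → ℝ → ℝ} (hu : Reg n u) (hv : Reg n v) (hi : i ≤ n) :
    dx^[i] (fun t x => u t x - v t x) = fun t x => dx^[i] u t x - dx^[i] v t x := by
  induction i generalizing n u v with
  | zero => rfl
  | succ i ih =>
    obtain ⟨m, rfl⟩ : ∃ m, n = m + 1 := ⟨n - 1, by omega⟩
    have : dx (fun t x => u t x - v t x) = fun t x => dx u t x - dx v t x := by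
      funext t x
      exact ((hu.hasDerivAt t x).sub (hv.hasDerivAt t x)).deriv
    rw [Function.iterate_succ_apply, this, ih hu.2.2 hv.2.2 (by omega)]
    rfl

/-! ### The modified energy -/

/-- The flux of the modified energy. -/
noncomputable def flux (γ0 γ1 γ2 : ℝ) (w H L : ℕ → ℝ → ℝ) (P A C Δ : ℝ → ℝ) (x : ℝ) : ℝ :=
  2 * (w 1 x * Δ x)
    - 2 * γ0 * (w 1 x * w 5 x - w 2 x * w 4 x + w 3 x * w 3 x * (1 / 2))
    - 2 * γ1 * (w 1 x * w 3 x - w 2 x * w 2 x * (1 / 2)) - γ2 * (w 1 x * w 1 x)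
    - 2 * γ0 * (H 0 x * (w 0 x * w 4 x) - (H 1 x * w 0 x + H 0 x * w 1 x) * w 3 x
      + H 0 x * (w 2 x * w 2 x) * (1 / 2) + H 1 x * (w 1 x * w 2 x) * 2 + H 2 x * (w 0 x * w 2 x)
      - H 2 x * (w 1 x * w 1 x) * (3 / 2) - H 3 x * (w 0 x * w 1 x))
    + (L 0 x * (w 0 x * w 2 x) - L 1 x * (w 0 x * w 1 x) - L 0 x * (w 1 x * w 1 x) * (1 / 2))
    + P x * (w 0 x * w 1 x) - C x * (w 1 x * w 1 x) - A x * (w 2 x * w 2 x)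

lemma hasDerivAt_flux {γ0 γ1 γ2 : ℝ} {w H L : ℕ → ℝ → ℝ} {P A C Δ : ℝ → ℝ}
    {x P1 A1 C1 Δ1 B D Ht : ℝ}
    (hw : ∀ i ≤ 5, HasDerivAt (w i) (w (i + 1) x) x)
    (hH : ∀ i ≤ 3, HasDerivAt (H i) (H (i + 1) x) x)
    (hL : ∀ i ≤ 1, HasDerivAt (L i) (L (i + 1) x) x)
    (hP : HasDerivAt P P1 x) (hA : HasDerivAt A A1 x) (hC : HasDerivAt C C1 x)
    (hΔ : HasDerivAt Δ Δ1 x)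
    (eL : L 0 x = 2 * H 0 x * A x - 2 * γ1 * H 0 x) (eP : P x = 2 * H 0 x * B - 2 * D) :
    HasDerivAt (flux γ0 γ1 γ2 w H L P A C Δ)
      ((2 * w 1 x * (Δ1 - (γ0 * w 6 x + γ1 * w 4 x + γ2 * w 2 x)) + Ht * w 0 x ^ 2
        + 2 * H 0 x * w 0 x * (Δ x - (γ0 * w 5 x + γ1 * w 3 x + γ2 * w 1 x)))
      - ((5 * γ0 * H 1 x + A1 - 2 * B) * w 2 x ^ 2
        + (-5 * γ0 * H 3 x + 3 / 2 * L 1 x - P x + C1) * w 1 x ^ 2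
        + (-2 * γ0 * H 4 x + L 2 x - P1 + 2 * H 0 x * (C x - γ2)) * (w 0 x * w 1 x)
        + (2 * H 0 x * D + Ht) * w 0 x ^ 2
        + (Δ x - (A x * w 3 x + B * w 2 x + C x * w 1 x + D * w 0 x))
          * (2 * H 0 x * w 0 x - 2 * w 2 x))) x := by
  have w0 := hw 0 (by norm_num)
  have w1 := hw 1 (by norm_num)
  have w2 := hw 2 (by norm_num)
  have w3 := hw 3 (by norm_num)
  have w4 := hw 4 (by norm_num)
  have w5 := hw 5 (by norm_num)
  have H0 := hH 0 (by norm_num)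
  have H1 := hH 1 (by norm_num)
  have H2 := hH 2 (by norm_num)
  have H3 := hH 3 (by norm_num)
  have L0 := hL 0 (by norm_num)
  have L1 := hL 1 (by norm_num)
  have h1 := ((w1.mul hΔ).const_mul 2)
  have h2 := ((((w1.mul w5).sub (w2.mul w4)).add ((w3.mul w3).mul_const (1 / 2))).const_mul (2 * γ0))
  have h3 := (((w1.mul w3).sub ((w2.mul w2).mul_const (1 / 2))).const_mul (2 * γ1))
  have h4 := (w1.mul w1).const_mul γ2
  have h5 := ((((((((H0.mul (w0.mul w4)).sub (((H1.mul w0).add (H0.mul w1)).mul w3)).add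
    ((H0.mul (w2.mul w2)).mul_const (1 / 2))).add ((H1.mul (w1.mul w2)).mul_const 2)).add
    (H2.mul (w0.mul w2))).sub ((H2.mul (w1.mul w1)).mul_const (3 / 2))).sub
    (H3.mul (w0.mul w1))).const_mul (2 * γ0))
  have h6 := ((L0.mul (w0.mul w2)).sub (L1.mul (w0.mul w1))).sub
    ((L0.mul (w1.mul w1)).mul_const (1 / 2))
  have h7 := hP.mul (w0.mul w1)
  have h8 := hC.mul (w1.mul w1)
  have h9 := hA.mul (w2.mul w2)
  refine ((((((((h1.sub h2).sub h3).sub h4).sub h5).add h6).add h7).sub h8).sub h9).congr_deriv ?_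
  simp only [Pi.mul_apply, Pi.add_apply]
  linear_combination (w 0 x * w 3 x) * eL + (w 0 x * w 2 x) * eP

lemma exists_weight {γ0 T : ℝ} (hγ0 : γ0 ≠ 0) {A B : ℝ → ℝ → ℝ} (hA : Reg 4 A) (hB : Reg 3 B)
    (tA : TReg T A) (tB : TReg T B) :
    ∃ K, Reg 4 K ∧ TReg T K ∧ ∀ t x, 5 * γ0 * dx K t x + dx A t x - 2 * B t x =
      -(1 / Real.pi) * ∫ y in (0 : ℝ)..(2 * Real.pi), B t y := by
  have hpi := Real.pi_pos
  set m : ℝ → ℝ := fun t => ∫ y in (0 : ℝ)..(2 * Real.pi), B t y with hm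
  have hmc : Continuous m := continuous_param hB.cont _ _
  have hPc := continuous_primitive_param hB.cont
  have hd : ∀ t x, HasDerivAt (fun x => 1 / (5 * γ0) * (-1 * A t x +
      2 * ((∫ y in (0 : ℝ)..x, B t y) + -1 / (2 * Real.pi) * (x * m t))))
      (1 / (5 * γ0) * (-1 * dx A t x + 2 * (B t x + -1 / (2 * Real.pi) * m t))) x := fun t x => by
    have h1 := intervalIntegral.integral_hasDerivAt_right ((hB.contx t).intervalIntegrable 0 x)
      ((hB.contx t).stronglyMeasurableAtFilter _ _) (hB.contx t).continuousAt
    have h2 := ((hasDerivAt_id x).mul_const (m t)).const_mul (-1 / (2 * Real.pi))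
    exact ((((hA.hasDerivAt t x).const_mul (-1)).add ((h1.add h2).const_mul 2)).const_mul
      (1 / (5 * γ0))).congr_deriv (by simp)
  refine ⟨fun t x => 1 / (5 * γ0) * (-1 * A t x +
      2 * ((∫ y in (0 : ℝ)..x, B t y) + -1 / (2 * Real.pi) * (x * m t))), ?_, ?_, fun t x => ?_⟩
  · refine Reg.of_hasDerivAt ?_ (fun t x => ?_) hd ?_
    · exact continuous_const.mul ((continuous_const.mul hA.cont).add (continuous_const.mul
        (hPc.add (continuous_const.mul (continuous_snd.mul (hmc.comp continuous_fst))))))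
    · have h3 : ∫ y in (0 : ℝ)..(x + 2 * Real.pi), B t y =
          (∫ y in (0 : ℝ)..x, B t y) + m t := by
        rw [← intervalIntegral.integral_add_adjacent_intervals
          ((hB.contx t).intervalIntegrable 0 x) ((hB.contx t).intervalIntegrable x _),
          (hB.per t).intervalIntegral_add_eq x 0, zero_add]
      simp only [hA.per t x, h3]
      field_simp
      ring
    · exact ((hA.2.2.const_mul (-1)).add ((hB.add
        ((Reg.ofTime hmc).const_mul _)).const_mul 2)).const_mul _
  · exact ((tA.const_mul (-1)).add (((tB.primitive hB.cont).add
      ((tB.mean_mul hB.cont (2 * Real.pi)).const_mul _)).const_mul 2)).const_mul _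
  · rw [show dx (fun t x => 1 / (5 * γ0) * (-1 * A t x +
      2 * ((∫ y in (0 : ℝ)..x, B t y) + -1 / (2 * Real.pi) * (x * m t)))) t x = _ from
      (hd t x).deriv]
    field_simp
    ring

/-- The sum of the absolute values of the derivatives of order at most three. -/
noncomputable def size (w : ℝ → ℝ → ℝ) (t x : ℝ) : ℝ := ∑ i ∈ Finset.range 4, |dx^[i] w t x|

lemma size_nonneg (w : ℝ → ℝ → ℝ) (t x : ℝ) : 0 ≤ size w t x :=
  Finset.sum_nonneg fun _ _ => abs_nonneg _

lemma abs_le_size (w : ℝ → ℝ → ℝ) (t x : ℝ) {i : ℕ} (hi : i ≤ 3) :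
    |dx^[i] w t x| ≤ size w t x :=
  Finset.single_le_sum (f := fun i => |dx^[i] w t x|) (fun _ _ => abs_nonneg _)
    (Finset.mem_range.2 (by omega))

lemma Tame.size_cube {M : ℝ} {w : ℝ → ℝ → ℝ} (h : Tame M w) :
    ∃ C, 0 ≤ C ∧ ∀ t x, size w t x ^ 3 ≤ C * energy w t := by
  obtain ⟨C, hC, h⟩ := h.interpolation
  refine ⟨64 * C, by positivity, fun t x => ?_⟩
  have h1 := pow_sum_div_card_le_sum_pow (s := Finset.range 4)
    (f := fun i => |dx^[i] w t x|) (fun _ _ => abs_nonneg _) 2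
  have h2 : ∑ i ∈ Finset.range 4, |dx^[i] w t x| ^ 3 ≤ ∑ i ∈ Finset.range 4, C * energy w t :=
    Finset.sum_le_sum fun i hi => h t x i (by have := Finset.mem_range.1 hi; omega)
  simp only [Finset.sum_const, Finset.card_range, nsmul_eq_mul] at h1 h2
  norm_num at h1 h2
  change size w t x ^ 3 / 16 ≤ _ at h1
  linarith

/-- A Grönwall inequality for a function vanishing initially. -/
lemma nonpos_of_deriv_le {T C : ℝ} {E E' : ℝ → ℝ} (hE : ContinuousOn E (Set.Icc 0 T))
    (hd : ∀ t ∈ Set.Ioo 0 T, HasDerivAt E (E' t) t) (hle : ∀ t ∈ Set.Ioo 0 T, E' t ≤ C * E t)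
    (h0 : E 0 = 0) : ∀ t ∈ Set.Icc 0 T, E t ≤ 0 := by
  intro t ht
  have hd' : ∀ s ∈ Set.Ioo 0 T, HasDerivAt (fun s => E s * Real.exp (-C * s))
      (E' s * Real.exp (-C * s) + E s * (Real.exp (-C * s) * -C)) s := fun s hs => by
    have := ((hasDerivAt_id s).const_mul (-C)).exp
    exact (hd s hs).mul (by simpa using this)
  have hanti : AntitoneOn (fun s => E s * Real.exp (-C * s)) (Set.Icc 0 T) := by
    refine antitoneOn_of_deriv_nonpos (convex_Icc _ _)
      (hE.mul (Continuous.continuousOn (by fun_prop))) ?_ ?_ <;> rw [interior_Icc]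
    · exact fun s hs => (hd' s hs).differentiableAt.differentiableWithinAt
    · intro s hs
      rw [(hd' s hs).deriv]
      nlinarith [hle s hs, Real.exp_pos (-C * s)]
  have := hanti ⟨le_rfl, ht.1.trans ht.2⟩ ht ht.1
  simp only [h0, zero_mul] at this
  exact nonpos_of_mul_nonpos_left this (Real.exp_pos _)

lemma iterate_hasDerivAt {n i : ℕ} {f : ℝ → ℝ → ℝ} (h : Reg n f) (hi : i + 1 ≤ n) (t x : ℝ) :
    HasDerivAt (dx^[i] f t) (dx^[i + 1] f t x) x := by
  rw [Function.iterate_succ_apply']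
  exact (h.dx_iterate hi).hasDerivAt t x

/-- The differential inequality satisfied by the density of the modified energy. -/
lemma density_le {T s q₁ q₂ q₃ c₁ c₂ c₃ R C₀ h cH d W0 W1 W2 : ℝ} (hs : s ≤ 0) (h₁ : |q₁| ≤ c₁)
    (h₂ : |q₂| ≤ c₂) (h₃ : |q₃| ≤ c₃) (hR : |R| ≤ C₀ * d ^ 2) (hh : |h| ≤ cH)
    (h0 : |W0| ≤ d) (h2 : |W2| ≤ d) (hT : C₀ * (2 * cH + 2) * d ^ 3 ≤ T) :
    s * W2 ^ 2 + q₁ * W1 ^ 2 + q₂ * (W0 * W1) + q₃ * W0 ^ 2 + R * (2 * h * W0 - 2 * W2) ≤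
      (c₁ + c₂ + c₃) * (W0 ^ 2 + W1 ^ 2) + T := by
  have a1 : q₁ * W1 ^ 2 ≤ c₁ * W1 ^ 2 :=
    mul_le_mul_of_nonneg_right ((le_abs_self _).trans h₁) (sq_nonneg _)
  have a3 : q₃ * W0 ^ 2 ≤ c₃ * W0 ^ 2 :=
    mul_le_mul_of_nonneg_right ((le_abs_self _).trans h₃) (sq_nonneg _)
  have a0 : s * W2 ^ 2 ≤ 0 := mul_nonpos_of_nonpos_of_nonneg hs (sq_nonneg _)
  have c1 := (abs_nonneg _).trans h₁
  have c2 := (abs_nonneg _).trans h₂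
  have c3 := (abs_nonneg _).trans h₃
  have a2 : q₂ * (W0 * W1) ≤ c₂ * (W0 ^ 2 + W1 ^ 2) := by
    refine (le_abs_self _).trans ?_
    rw [abs_mul]
    refine mul_le_mul h₂ ?_ (abs_nonneg _) c2
    rw [abs_le]
    constructor <;> nlinarith [sq_nonneg (W0 + W1), sq_nonneg (W0 - W1)]
  have a4 : R * (2 * h * W0 - 2 * W2) ≤ C₀ * d ^ 2 * ((2 * cH + 2) * d) := by
    refine (le_abs_self _).trans ?_
    rw [abs_mul]
    refine mul_le_mul hR ?_ (abs_nonneg _) ((abs_nonneg _).trans hR)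
    refine (abs_sub _ _).trans ?_
    rw [abs_mul, abs_mul, abs_mul, abs_two]
    have := mul_le_mul hh h0 (abs_nonneg _) ((abs_nonneg _).trans hh)
    nlinarith
  nlinarith [mul_nonneg c1 (sq_nonneg W0), mul_nonneg c3 (sq_nonneg W1)]

theorem eq_zero_of_energy {γ0 γ1 γ2 T M : ℝ} (hγ0 : γ0 ≠ 0) {w Δ A B C D : ℝ → ℝ → ℝ}
    (hw : Tame M w) (hΔ : Reg 1 Δ) (hA : Reg 4 A) (hB : Reg 3 B) (hC : Reg 1 C) (hD : Reg 1 D)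
    (tA : TReg T A) (tB : TReg T B)
    (hB0 : ∀ t ∈ Set.Icc 0 T, 0 ≤ ∫ y in (0 : ℝ)..(2 * Real.pi), B t y)
    (heq : TInt T w fun t x =>
      Δ t x - (γ0 * dx^[5] w t x + γ1 * dx^[3] w t x + γ2 * dx^[1] w t x))
    {C₀ : ℝ} (hC₀ : 0 ≤ C₀)
    (hR : ∀ t ∈ Set.Icc 0 T, ∀ x, |Δ t x - (A t x * dx^[3] w t x + B t x * dx^[2] w t x +
      C t x * dx^[1] w t x + D t x * dx^[0] w t x)| ≤ C₀ * size w t x ^ 2)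
    (h0 : ∀ x, w 0 x = 0) : ∀ t ∈ Set.Icc 0 T, ∀ x, w t x = 0 := by
  have hr := hw.reg
  have hpi := Real.two_pi_pos
  obtain ⟨K, hK, tK, hKeq⟩ := exists_weight hγ0 hA hB tA tB
  obtain ⟨k, hk0, hk⟩ := hK.bounded T
  set H : ℝ → ℝ → ℝ := fun t x => K t x + (k + 1) with hHdef
  have hH : Reg 4 H := hK.add (Reg.const _)
  have tH : TReg T H := tK.add (TReg.const _)
  have hH1 : ∀ t ∈ Set.Icc 0 T, ∀ x, 1 ≤ H t x := fun t ht x => by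
    have := neg_le_of_abs_le (hk t ht x)
    simp only [hHdef]; linarith
  have hdH : ∀ t x, dx H t x = dx K t x := fun t x => by
    simp only [hHdef, dx, deriv_add_const]
  obtain ⟨H', hH'c, hH'⟩ := tH
  have hHm := hH.mono (show 2 ≤ 4 by norm_num)
  set L : ℝ → ℝ → ℝ := fun t x => 2 * H t x * A t x - 2 * γ1 * H t x with hLdef
  have hL : Reg 2 L := ((hHm.const_mul 2).mul (hA.mono (by norm_num))).sub (hHm.const_mul (2 * γ1))
  set P : ℝ → ℝ → ℝ := fun t x => 2 * H t x * B t x - 2 * D t x with hPdef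
  have hP : Reg 1 P := (((hH.mono (by norm_num)).const_mul 2).mul (hB.mono (by norm_num))).sub
    (hD.const_mul 2)
  -- the time derivatives
  have hF : Reg 1 fun t x => Δ t x - (γ0 * dx^[5] w t x + γ1 * dx^[3] w t x + γ2 * dx^[1] w t x) :=
    hΔ.sub ((((hr.dx_iterate (by norm_num)).const_mul γ0).add
      ((hr.dx_iterate (by norm_num)).const_mul γ1)).add
      ((hr.dx_iterate (by norm_num)).const_mul γ2))
  have hdF : dx (fun t x => Δ t x - (γ0 * dx^[5] w t x + γ1 * dx^[3] w t x + γ2 * dx^[1] w t x)) =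
      fun t x => dx Δ t x - (γ0 * dx^[6] w t x + γ1 * dx^[4] w t x + γ2 * dx^[2] w t x) := by
    funext t x
    exact ((hΔ.hasDerivAt t x).sub ((((iterate_hasDerivAt hr (by norm_num) t x).const_mul γ0).add
      ((iterate_hasDerivAt hr (by norm_num) t x).const_mul γ1)).add
      ((iterate_hasDerivAt hr (by norm_num) t x).const_mul γ2))).deriv
  have hw0 := fun t ht x => heq.hasDerivAt hF.cont (t := t) ht x
  have hw1 := fun t ht x => (heq.dx (k := 9) (l := 0) hr hF).hasDerivAt hF.2.2.cont (t := t) ht x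
  rw [hdF] at hw1
  -- the energy
  set e' : ℝ → ℝ → ℝ := fun t x =>
    2 * dx^[1] w t x * (dx Δ t x - (γ0 * dx^[6] w t x + γ1 * dx^[4] w t x + γ2 * dx^[2] w t x))
      + H' t x * dx^[0] w t x ^ 2 + 2 * H t x * dx^[0] w t x *
        (Δ t x - (γ0 * dx^[5] w t x + γ1 * dx^[3] w t x + γ2 * dx^[1] w t x)) with he'
  have hwc : ∀ i ≤ 6, Continuous (Function.uncurry (dx^[i] w)) := fun i hi =>
    (hr.dx_iterate (j := 0) (by omega)).cont
  have hec : Continuous (Function.uncurry fun t x =>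
      dx^[1] w t x ^ 2 + H t x * dx^[0] w t x ^ 2) :=
    ((hwc 1 (by norm_num)).pow 2).add (hH.cont.mul ((hwc 0 (by norm_num)).pow 2))
  have hdFc : Continuous (Function.uncurry fun t x =>
      dx Δ t x - (γ0 * dx^[6] w t x + γ1 * dx^[4] w t x + γ2 * dx^[2] w t x)) := by
    rw [← hdF]
    exact hF.2.2.cont
  have he'c : Continuous (Function.uncurry e') :=
    (((continuous_const.mul (hwc 1 (by norm_num))).mul hdFc).add
      (hH'c.mul ((hwc 0 (by norm_num)).pow 2))).add
      (((continuous_const.mul hH.cont).mul (hwc 0 (by norm_num))).mul hF.cont)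
  set E : ℝ → ℝ := fun t => ∫ x in (0 : ℝ)..(2 * Real.pi),
    (dx^[1] w t x ^ 2 + H t x * dx^[0] w t x ^ 2) with hE
  have hEd : ∀ t ∈ Set.Ioo 0 T, HasDerivAt E (∫ x in (0 : ℝ)..(2 * Real.pi), e' t x) t := by
    intro t ht
    refine hasDerivAt_param isOpen_Ioo hec he'c (fun t ht x => ?_) _ _ ht
    have h1 := (hw1 t ht x).pow 2
    have h2 := (hH' t ht x).mul ((hw0 t ht x).pow 2)
    refine (h1.add h2).congr_deriv ?_
    simp only [he', Function.iterate_zero, id, Function.iterate_one, Pi.pow_apply]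
    push_cast
    ring
  have hEe : ∀ t ∈ Set.Icc 0 T, energy w t ≤ E t := by
    intro t ht
    refine intervalIntegral.integral_mono_on hpi.le
      ((((hwc 0 (by norm_num)).pow 2).add ((hwc 1 (by norm_num)).pow 2)).comp
        (Continuous.prodMk_right t) |>.intervalIntegrable _ _)
      ((hec.comp (Continuous.prodMk_right t)).intervalIntegrable _ _) fun x _ => ?_
    have := mul_le_mul_of_nonneg_right (hH1 t ht x) (sq_nonneg (dx^[0] w t x))
    linarith
  -- the constants
  obtain ⟨c₁, hc₁0, hc₁⟩ := (((((hH.dx_iterate (i := 3) (j := 0) (by norm_num)).const_mul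
    (-5 * γ0)).add ((hL.dx_iterate (i := 1) (j := 0) (by norm_num)).const_mul (3 / 2))).sub
    (hP.mono (Nat.zero_le _))).add (hC.dx_iterate (i := 1) (j := 0) (by norm_num))).bounded T
  obtain ⟨c₂, hc₂0, hc₂⟩ := (((((hH.dx_iterate (i := 4) (j := 0) (by norm_num)).const_mul
    (-2 * γ0)).add (hL.dx_iterate (i := 2) (j := 0) (by norm_num))).sub
    (hP.dx_iterate (i := 1) (j := 0) (by norm_num))).add
    (((hH.mono (Nat.zero_le _)).const_mul 2).mul
      ((hC.mono (Nat.zero_le _)).sub (Reg.const γ2)))).bounded T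
  obtain ⟨cD, hcD0, hcD⟩ := (((hH.mono (Nat.zero_le _)).const_mul 2).mul
    (hD.mono (Nat.zero_le _))).bounded T
  obtain ⟨cH, hcH0, hcH⟩ := hH.bounded T
  obtain ⟨cT, hcT⟩ := ((isCompact_Icc (a := (0 : ℝ)) (b := T)).prod
    (isCompact_Icc (a := (0 : ℝ)) (b := 2 * Real.pi))).exists_bound_of_continuousOn
    hH'c.continuousOn
  obtain ⟨cI, hcI0, hcI⟩ := hw.size_cube
  set κ := C₀ * (2 * cH + 2) * cI with hκ
  have hκ0 : 0 ≤ κ := by positivity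
  have hle : ∀ t ∈ Set.Ioo 0 T, ∫ x in (0 : ℝ)..(2 * Real.pi), e' t x ≤
      (c₁ + c₂ + (cD + |cT|) + 2 * Real.pi * κ) * E t := by
    intro t ht
    have htI := Set.Ioo_subset_Icc_self ht
    set S : ℝ → ℝ := fun x =>
      (5 * γ0 * dx^[1] H t x + dx A t x - 2 * B t x) * dx^[2] w t x ^ 2
        + (-5 * γ0 * dx^[3] H t x + 3 / 2 * dx^[1] L t x - P t x + dx C t x) * dx^[1] w t x ^ 2
        + (-2 * γ0 * dx^[4] H t x + dx^[2] L t x - dx P t x + 2 * H t x * (C t x - γ2))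
          * (dx^[0] w t x * dx^[1] w t x)
        + (2 * H t x * D t x + H' t x) * dx^[0] w t x ^ 2
        + (Δ t x - (A t x * dx^[3] w t x + B t x * dx^[2] w t x +
          C t x * dx^[1] w t x + D t x * dx^[0] w t x))
          * (2 * H t x * dx^[0] w t x - 2 * dx^[2] w t x) with hS
    have hQ := fun x => hasDerivAt_flux (γ0 := γ0) (γ1 := γ1) (γ2 := γ2) (w := fun i => dx^[i] w t)
      (H := fun i => dx^[i] H t) (L := fun i => dx^[i] L t) (P := P t) (A := A t) (C := C t)
      (Δ := Δ t) (B := B t x) (D := D t x) (Ht := H' t x) (x := x)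
      (fun i hi => iterate_hasDerivAt hr (by omega) t x)
      (fun i hi => iterate_hasDerivAt hH (by omega) t x)
      (fun i hi => iterate_hasDerivAt hL (by omega) t x)
      (hP.hasDerivAt t x) (hA.hasDerivAt t x) (hC.hasDerivAt t x) (hΔ.hasDerivAt t x) rfl rfl
    have w0c : Continuous (dx^[0] w t) := (hr.dx_iterate (j := 0) (by norm_num)).contx t
    have w1c : Continuous (dx^[1] w t) := (hr.dx_iterate (j := 0) (by norm_num)).contx t
    have w2c : Continuous (dx^[2] w t) := (hr.dx_iterate (j := 0) (by norm_num)).contx t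
    have w3c : Continuous (dx^[3] w t) := (hr.dx_iterate (j := 0) (by norm_num)).contx t
    have hSc : Continuous S := by
      have H0c := hH.contx t
      have H1c : Continuous (dx^[1] H t) := (hH.dx_iterate (j := 0) (by norm_num)).contx t
      have H3c : Continuous (dx^[3] H t) := (hH.dx_iterate (j := 0) (by norm_num)).contx t
      have H4c : Continuous (dx^[4] H t) := (hH.dx_iterate (j := 0) (by norm_num)).contx t
      have L1c : Continuous (dx^[1] L t) := (hL.dx_iterate (j := 0) (by norm_num)).contx t
      have L2c : Continuous (dx^[2] L t) := (hL.dx_iterate (j := 0) (by norm_num)).contx t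
      have A0c := hA.contx t
      have A1c := hA.2.2.contx t
      have B0c := hB.contx t
      have C0c := hC.contx t
      have C1c := hC.2.2.contx t
      have D0c := hD.contx t
      have P0c := hP.contx t
      have P1c := hP.2.2.contx t
      have Δc := hΔ.contx t
      have Htc : Continuous (H' t) := hH'c.comp (Continuous.prodMk_right t)
      fun_prop
    have he't : Continuous (e' t) := he'c.comp (Continuous.prodMk_right t)
    have hzero : ∫ x in (0 : ℝ)..(2 * Real.pi), (e' t x - S x) = 0 := by
      refine integral_deriv_eq_zero hQ (he't.sub hSc) fun x => ?_
      have pw := fun i (hi : i ≤ 5) => (hr.dx_iterate (i := i) (j := 0) (by omega)).per t x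
      have pH := fun i (hi : i ≤ 3) => (hH.dx_iterate (i := i) (j := 0) (by omega)).per t x
      have pL := fun i (hi : i ≤ 1) => (hL.dx_iterate (i := i) (j := 0) (by omega)).per t x
      simp only [flux, pw 0 (by norm_num), pw 1 (by norm_num), pw 2 (by norm_num),
        pw 3 (by norm_num), pw 4 (by norm_num), pw 5 (by norm_num), pH 0 (by norm_num),
        pH 1 (by norm_num), pH 2 (by norm_num), pH 3 (by norm_num), pL 0 (by norm_num),
        pL 1 (by norm_num), hP.per t x, hA.per t x, hC.per t x, hΔ.per t x]
    rw [intervalIntegral.integral_sub (he't.intervalIntegrable _ _) (hSc.intervalIntegrable _ _),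
      sub_eq_zero] at hzero
    rw [hzero]
    have hSle : ∀ x ∈ Set.Icc 0 (2 * Real.pi), S x ≤ (c₁ + c₂ + (cD + |cT|)) *
        (dx^[0] w t x ^ 2 + dx^[1] w t x ^ 2) + κ * energy w t := by
      intro x hx
      refine density_le (d := size w t x) ?_ (hc₁ t htI x) (hc₂ t htI x) ?_ (hR t htI x)
        (hcH t htI x) (abs_le_size w t x (by norm_num))
        (abs_le_size w t x (by norm_num)) ?_
      · rw [Function.iterate_one, hdH, hKeq]
        have := mul_nonneg (one_div_pos.2 Real.pi_pos).le (hB0 t htI)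
        linarith
      · exact (abs_add_le _ _).trans (add_le_add (hcD t htI x)
          ((hcT (t, x) ⟨htI, hx⟩).trans (le_abs_self _)))
      · rw [hκ, mul_assoc _ cI]
        exact mul_le_mul_of_nonneg_left (hcI t x) (by positivity)
    have hsq : Continuous fun x => dx^[0] w t x ^ 2 + dx^[1] w t x ^ 2 :=
      (w0c.pow 2).add (w1c.pow 2)
    have hrc : Continuous fun x => (c₁ + c₂ + (cD + |cT|)) *
        (dx^[0] w t x ^ 2 + dx^[1] w t x ^ 2) + κ * energy w t :=
      (hsq.const_mul _).add continuous_const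
    refine (intervalIntegral.integral_mono_on hpi.le (hSc.intervalIntegrable _ _)
      (hrc.intervalIntegrable _ _) hSle).trans ?_
    rw [intervalIntegral.integral_add ((hsq.const_mul _).intervalIntegrable _ _)
      (continuous_const.intervalIntegrable _ _), intervalIntegral.integral_const_mul,
      intervalIntegral.integral_const, smul_eq_mul]
    change (c₁ + c₂ + (cD + |cT|)) * energy w t + _ ≤ _
    have hc : 0 ≤ c₁ + c₂ + (cD + |cT|) + 2 * Real.pi * κ := by positivity
    have := mul_le_mul_of_nonneg_left (hEe t htI) hc
    linarith
  have hE0 : E 0 = 0 := by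
    have h0' : w 0 = fun _ => 0 := funext h0
    simp [hE, h0', dx]
  intro t ht x
  have hEt := nonpos_of_deriv_le (continuous_param hec _ _).continuousOn hEd hle hE0 t ht
  have h3 := hcI t x
  have h4 : size w t x ^ 3 ≤ 0 := h3.trans (mul_nonpos_of_nonneg_of_nonpos hcI0
    ((hEe t ht).trans hEt))
  have h5 : size w t x = 0 := by
    have := size_nonneg w t x
    exact pow_eq_zero_iff (n := 3) (by norm_num) |>.1 (le_antisymm h4 (by positivity))
  have h6 := abs_le_size w t x (i := 0) (by norm_num)
  rw [h5] at h6
  exact abs_nonpos_iff.1 h6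

/-! ### Linearisation of the nonlinearity -/

/-- `f` is the linear part of `F - G`, up to errors quadratic in `d`. -/
def Linearised (T : ℝ) (d F G f : ℝ → ℝ → ℝ) : Prop :=
  ∃ C, 0 ≤ C ∧ ∀ t ∈ Set.Icc 0 T, ∀ x, |F t x| ≤ C ∧ |G t x| ≤ C ∧ |F t x - G t x| ≤ C * d t x ∧
    |f t x| ≤ C * d t x ∧ |F t x - G t x - f t x| ≤ C * d t x ^ 2

namespace Linearised

variable {T : ℝ} {d F G f F' G' f' : ℝ → ℝ → ℝ}

lemma mul (h : Linearised T d F G f) (h' : Linearised T d F' G' f') :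
    Linearised T d (fun t x => F t x * F' t x) (fun t x => G t x * G' t x)
      (fun t x => f t x * F' t x + F t x * f' t x) := by
  obtain ⟨C, hC, h⟩ := h
  obtain ⟨C', hC', h'⟩ := h'
  refine ⟨3 * (C * C'), by positivity, fun t ht x => ?_⟩
  obtain ⟨a1, a2, a3, a4, a5⟩ := h t ht x
  obtain ⟨b1, b2, b3, b4, b5⟩ := h' t ht x
  have hm : ∀ {p q r s : ℝ}, |p| ≤ r → |q| ≤ s → |p * q| ≤ r * s := fun hp hq => by
    rw [abs_mul]
    exact mul_le_mul hp hq (abs_nonneg _) ((abs_nonneg _).trans hp)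
  have m1 := hm a1 b1
  have m2 := hm a2 b2
  have m3 := hm a3 b1
  have m4 := hm a2 b3
  have m5 := hm a4 b1
  have m6 := hm a1 b4
  have m7 := hm a5 b1
  have m8 := hm a2 b5
  have m9 := hm a3 b4
  have p0 := (abs_nonneg _).trans m1
  have p1 := (abs_nonneg _).trans m3
  have p2 := (abs_nonneg _).trans m7
  rw [abs_le] at m1 m2 m3 m4 m5 m6 m7 m8 m9
  refine ⟨?_, ?_, ?_, ?_, ?_⟩ <;> rw [abs_le] <;> constructor <;> linarith

lemma const (c : ℝ) (hd : ∀ t x, 0 ≤ d t x) :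
    Linearised T d (fun _ _ => c) (fun _ _ => c) (fun _ _ => 0) :=
  ⟨|c|, abs_nonneg c, fun t _ x => ⟨le_rfl, le_rfl, by simpa using mul_nonneg (abs_nonneg c) (hd t x),
    by simpa using mul_nonneg (abs_nonneg c) (hd t x), by simpa using by positivity⟩⟩

lemma add (h : Linearised T d F G f) (h' : Linearised T d F' G' f') :
    Linearised T d (fun t x => F t x + F' t x) (fun t x => G t x + G' t x)
      (fun t x => f t x + f' t x) := by
  obtain ⟨C, hC, h⟩ := h
  obtain ⟨C', hC', h'⟩ := h'
  refine ⟨C + C', by positivity, fun t ht x => ?_⟩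
  obtain ⟨a1, a2, a3, a4, a5⟩ := h t ht x
  obtain ⟨b1, b2, b3, b4, b5⟩ := h' t ht x
  rw [abs_le] at a1 a2 a3 a4 a5 b1 b2 b3 b4 b5
  refine ⟨?_, ?_, ?_, ?_, ?_⟩ <;> rw [abs_le] <;> constructor <;> linarith

lemma pow (hd : ∀ t x, 0 ≤ d t x) (h : Linearised T d F G f) (m : ℕ) :
    Linearised T d (fun t x => F t x ^ m) (fun t x => G t x ^ m)
      (fun t x => m * F t x ^ (m - 1) * f t x) := by
  induction m with
  | zero => simpa using const (T := T) 1 hd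
  | succ m ih =>
    have := ih.mul h
    simp only [← pow_succ] at this
    convert this using 3 with t x
    rcases m with _ | m
    · simp
    · simp only [Nat.add_sub_cancel]
      push_cast
      ring

lemma sum {ι : Type*} (hd : ∀ t x, 0 ≤ d t x) (s : Finset ι) {F G f : ι → ℝ → ℝ → ℝ}
    (h : ∀ i ∈ s, Linearised T d (F i) (G i) (f i)) :
    Linearised T d (fun t x => ∑ i ∈ s, F i t x) (fun t x => ∑ i ∈ s, G i t x)
      (fun t x => ∑ i ∈ s, f i t x) := by
  classical
  induction s using Finset.induction_on with
  | empty => simpa using const (T := T) 0 hd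
  | insert i s hi ih =>
    simp only [Finset.sum_insert hi]
    exact (h i (Finset.mem_insert_self _ _)).add
      (ih fun j hj => h j (Finset.mem_insert_of_mem hj))

end Linearised

section

variable {γ0 γ1 γ2 T : ℝ} {j0 : ℕ} {lam : Fin j0 → ℝ} {a b c d : Fin j0 → ℕ}

lemma linearised_iterate {u v : ℝ → ℝ → ℝ} (hu : Reg 10 u) (hv : Reg 10 v) {i : ℕ} (hi : i ≤ 3) :
    Linearised T (size fun t x => u t x - v t x) (dx^[i] u) (dx^[i] v)
      (dx^[i] fun t x => u t x - v t x) := by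
  obtain ⟨C, hC, h⟩ := (hu.dx_iterate (i := i) (j := 0) (by omega)).bounded T
  obtain ⟨C', hC', h'⟩ := (hv.dx_iterate (i := i) (j := 0) (by omega)).bounded T
  refine ⟨C + C' + 1, by positivity, fun t ht x => ?_⟩
  have hs := abs_le_size (fun t x => u t x - v t x) t x hi
  have h0 := size_nonneg (fun t x => u t x - v t x) t x
  have hle : |dx^[i] (fun t x => u t x - v t x) t x| ≤
      (C + C' + 1) * size (fun t x => u t x - v t x) t x :=
    hs.trans (le_mul_of_one_le_left h0 (by linarith))
  have e : dx^[i] u t x - dx^[i] v t x = dx^[i] (fun t x => u t x - v t x) t x := by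
    rw [dx_iterate_sub hu hv (by omega)]
  rw [e]
  refine ⟨by linarith [h t ht x], by linarith [h' t ht x], hle, hle, ?_⟩
  rw [sub_self, abs_zero]
  positivity

lemma linearised_Nfun {u v : ℝ → ℝ → ℝ} (hu : Reg 10 u) (hv : Reg 10 v) :
    ∃ C, 0 ≤ C ∧ ∀ t ∈ Set.Icc 0 T, ∀ x,
      |Nfun j0 lam a b c d (u t) x - Nfun j0 lam a b c d (v t) x -
        (Nfun j0 (fun j => lam j * a j) (fun j => a j - 1) b c d (u t) x *
            dx^[3] (fun t x => u t x - v t x) t x +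
          Nfun j0 (fun j => lam j * b j) a (fun j => b j - 1) c d (u t) x *
            dx^[2] (fun t x => u t x - v t x) t x +
          Nfun j0 (fun j => lam j * c j) a b (fun j => c j - 1) d (u t) x *
            dx^[1] (fun t x => u t x - v t x) t x +
          Nfun j0 (fun j => lam j * d j) a b c (fun j => d j - 1) (u t) x *
            dx^[0] (fun t x => u t x - v t x) t x)| ≤
        C * size (fun t x => u t x - v t x) t x ^ 2 := by
  have hd := size_nonneg fun t x => u t x - v t x
  have L := fun i (hi : i ≤ 3) => linearised_iterate (T := T) hu hv hi
  obtain ⟨C, hC, h⟩ := Linearised.sum hd Finset.univ fun (j : Fin j0) _ =>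
    (((((Linearised.const (T := T) (lam j) hd).mul ((L 3 le_rfl).pow hd (a j))).mul
      ((L 2 (by norm_num)).pow hd (b j))).mul ((L 1 (by norm_num)).pow hd (c j))).mul
      ((L 0 (by norm_num)).pow hd (d j)))
  refine ⟨C, hC, fun t ht x => (le_of_eq ?_).trans (h t ht x).2.2.2.2⟩
  simp only [Nfun_eq]
  congr 2
  simp only [Finset.sum_mul]
  rw [← Finset.sum_add_distrib, ← Finset.sum_add_distrib, ← Finset.sum_add_distrib]
  exact Finset.sum_congr rfl fun j _ => by ring

lemma TInt.iterate {k l : ℕ} {f F : ℝ → ℝ → ℝ} (hf : Reg k f) (hF : Reg l F) (h : TInt T f F)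
    {i : ℕ} (hk : i ≤ k) (hl : i ≤ l) : TInt T (FifthOrderStmt3.dx^[i] f)
      (FifthOrderStmt3.dx^[i] F) := by
  induction i generalizing k l f F with
  | zero => exact h
  | succ i ih =>
    obtain ⟨m, rfl⟩ : ∃ m, k = m + 1 := ⟨k - 1, by omega⟩
    obtain ⟨n, rfl⟩ : ∃ n, l = n + 1 := ⟨l - 1, by omega⟩
    exact ih hf.2.2 hF.2.2 (h.dx hf hF) (by omega) (by omega)

lemma TInt.treg {l : ℕ} {f F : ℝ → ℝ → ℝ} (hF : Reg l F) (h : TInt T f F) : TReg T f :=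
  ⟨F, hF.cont, fun _ ht x => h.hasDerivAt hF.cont ht x⟩

lemma treg_Nfun {u F : ℝ → ℝ → ℝ} (hu : Reg 10 u) (hF : Reg 5 F) (h : TInt T u F) :
    TReg T fun t x => Nfun j0 lam a b c d (u t) x := by
  simp only [Nfun_eq]
  have hc : ∀ i ≤ 3, Continuous (Function.uncurry (dx^[i] u)) := fun i hi =>
    (hu.dx_iterate (j := 0) (by omega)).cont
  have ht : ∀ i ≤ 3, TReg T (dx^[i] u) := fun i hi =>
    (h.iterate hu hF (i := i) (by omega) (by omega)).treg
      (hF.dx_iterate (i := i) (j := 0) (by omega))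
  have cp : ∀ i ≤ 3, ∀ m : ℕ, Continuous (Function.uncurry fun t x => dx^[i] u t x ^ m) :=
    fun i hi m => (hc i hi).pow m
  have tp : ∀ i ≤ 3, ∀ m : ℕ, TReg T fun t x => dx^[i] u t x ^ m :=
    fun i hi m => (ht i hi).pow (hc i hi) m
  refine TReg.sum _ fun j _ => ?_
  have c1 := cp 3 le_rfl (a j)
  have c2 := cp 2 (by norm_num) (b j)
  have c3 := cp 1 (by norm_num) (c j)
  have c4 := cp 0 (by norm_num) (d j)
  have d1 : Continuous (Function.uncurry fun t x => lam j * dx^[3] u t x ^ a j) :=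
    continuous_const.mul c1
  have d2 : Continuous (Function.uncurry fun t x => lam j * dx^[3] u t x ^ a j *
    dx^[2] u t x ^ b j) := d1.mul c2
  have d3 : Continuous (Function.uncurry fun t x => lam j * dx^[3] u t x ^ a j *
    dx^[2] u t x ^ b j * dx^[1] u t x ^ c j) := d2.mul c3
  exact TReg.mul d3 c4 (TReg.mul d2 c3 (TReg.mul d1 c2 ((tp 3 le_rfl (a j)).const_mul (lam j))
    (tp 2 (by norm_num) (b j))) (tp 1 (by norm_num) (c j))) (tp 0 (by norm_num) (d j))

lemma TInt.sub {f F g G : ℝ → ℝ → ℝ} (hF : Continuous (Function.uncurry F))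
    (hG : Continuous (Function.uncurry G)) (hf : TInt T f F) (hg : TInt T g G) :
    TInt T (fun t x => f t x - g t x) (fun t x => F t x - G t x) := by
  intro t ht x
  have hFx : Continuous fun s => F s x := hF.comp (Continuous.prodMk_left x)
  have hGx : Continuous fun s => G s x := hG.comp (Continuous.prodMk_left x)
  have hft := hf t ht x
  have hgt := hg t ht x
  rw [intervalIntegral.integral_sub (hFx.intervalIntegrable _ _) (hGx.intervalIntegrable _ _)]
  linarith

lemma integral_Nfun_eq_PN {u : ℝ → ℝ → ℝ} (hu : Reg 10 u) (t : ℝ) :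
    ∫ x in (0 : ℝ)..(2 * Real.pi),
      Nfun j0 (fun j => lam j * b j) a (fun j => b j - 1) c d (u t) x =
      2 * Real.pi * PN j0 lam a b c d (u t) := by
  have hc : ∀ i ≤ 3, Continuous (dx^[i] u t) := fun i hi =>
    (hu.dx_iterate (j := 0) (by omega)).contx t
  have c3 := hc 3 le_rfl
  have c2 := hc 2 (by norm_num)
  have c1 := hc 1 (by norm_num)
  have c0 := hc 0 (by norm_num)
  have hpi := Real.pi_ne_zero
  simp only [Nfun_eq]
  rw [intervalIntegral.integral_finsetSum fun j _ =>
    Continuous.intervalIntegrable (by fun_prop) _ _, PN, Finset.mul_sum]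
  refine Finset.sum_congr rfl fun j _ => ?_
  rw [← mul_assoc, mul_div_cancel₀ _ (by positivity), ← intervalIntegral.integral_const_mul]
  refine intervalIntegral.integral_congr fun x _ => ?_
  simp only [dx_iterate_eq, iteratedDeriv_one, iteratedDeriv_zero]
  ring

theorem eq_of_tInt {M N : ℝ} (hγ0 : γ0 ≠ 0) {u v : ℝ → ℝ → ℝ} (hu : Tame M u) (hv : Tame N v)
    (tu : TInt T u (rhs γ0 γ1 γ2 j0 lam a b c d u))
    (tv : TInt T v (rhs γ0 γ1 γ2 j0 lam a b c d v))
    (hP : ∀ t ∈ Set.Icc 0 T, 0 ≤ PN j0 lam a b c d (u t)) (h0 : u 0 = v 0) :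
    ∀ t ∈ Set.Icc 0 T, ∀ x, u t x = v t x := by
  have ru := hu.reg
  have rv := hv.reg
  have rF : Reg 5 (rhs γ0 γ1 γ2 j0 lam a b c d u) := reg_rhs ru
  have rG : Reg 5 (rhs γ0 γ1 γ2 j0 lam a b c d v) := reg_rhs rv
  obtain ⟨C, hC, hR⟩ := linearised_Nfun (T := T) (lam := lam) (a := a) (b := b) (c := c) (d := d)
    ru rv
  have heq := tu.sub rF.cont rG.cont tv
  have hΔ : Reg 1 fun t x => Nfun j0 lam a b c d (u t) x - Nfun j0 lam a b c d (v t) x :=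
    ((reg_Nfun ru).sub (reg_Nfun rv)).mono (by norm_num)
  have key := eq_zero_of_energy (γ1 := γ1) (γ2 := γ2) hγ0 (hu.sub hv) hΔ
    ((reg_Nfun ru).mono (by norm_num)) ((reg_Nfun ru).mono (by norm_num))
    ((reg_Nfun ru).mono (by norm_num)) ((reg_Nfun ru).mono (by norm_num))
    (treg_Nfun ru rF tu) (treg_Nfun ru rF tu) (fun t ht => ?_) ?_ hC hR
    (fun x => by rw [h0, sub_self])
  · exact fun t ht x => sub_eq_zero.1 (key t ht x)
  · rw [integral_Nfun_eq_PN ru t]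
    exact mul_nonneg Real.two_pi_pos.le (hP t ht)
  · convert heq using 3 with t x
    rw [dx_iterate_sub ru rv (by norm_num), dx_iterate_sub ru rv (by norm_num),
      dx_iterate_sub ru rv (by norm_num)]
    simp only [rhs]
    ring

end

/-- **Uniqueness for parabolic resonance type, positive case.**
If `u₁, u₂ ∈ C([0,T];L²) ∩ L^∞([0,T];H^{12})` are solutions with the same initial datum
`φ ∈ H^{12}(𝕋)` and `P_N(u₁(t)) ≥ 0` on `[0,T]`, then `u₁ = u₂` on `[0,T]`. -/
theorem lwp_parabolic_uniqueness
    (γ0 γ1 γ2 : ℝ) (hγ0 : γ0 ≠ 0)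
    (j0 : ℕ) (lam : Fin j0 → ℝ) (a b c d : Fin j0 → ℕ)
    (hp : ∀ j : Fin j0, 2 ≤ a j + b j + c j + d j)
    (T : ℝ) (hT : 0 < T) (φ : ℝ → ℝ) (hφ : MemHs 12 φ)
    (u₁ u₂ : ℝ → ℝ → ℝ)
    (hsol₁ : IsSolution γ0 γ1 γ2 j0 lam a b c d 0 T u₁)
    (hsol₂ : IsSolution γ0 γ1 γ2 j0 lam a b c d 0 T u₂)
    (hmem₁ : ∀ t ∈ Set.Icc (0:ℝ) T, MemHs 12 (u₁ t))
    (hmem₂ : ∀ t ∈ Set.Icc (0:ℝ) T, MemHs 12 (u₂ t))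
    (hbdd₁ : ∃ M : ℝ, ∀ t ∈ Set.Icc (0:ℝ) T, hsNorm 12 (u₁ t) ≤ M)
    (hbdd₂ : ∃ M : ℝ, ∀ t ∈ Set.Icc (0:ℝ) T, hsNorm 12 (u₂ t) ≤ M)
    (hcont₁ : ContInHs 0 (Set.Icc (0:ℝ) T) u₁)
    (hcont₂ : ContInHs 0 (Set.Icc (0:ℝ) T) u₂)
    (hinit₁ : u₁ 0 = φ) (hinit₂ : u₂ 0 = φ)
    (hPNpos : ∀ t ∈ Set.Icc (0:ℝ) T, 0 ≤ PN j0 lam a b c d (u₁ t)) :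
    ∀ t ∈ Set.Icc (0:ℝ) T, ∀ x : ℝ, u₁ t x = u₂ t x := by
  obtain ⟨M₁, hM₁⟩ := hbdd₁
  obtain ⟨M₂, hM₂⟩ := hbdd₂
  have h₁ := tame_of_hyps hT hmem₁ hM₁ hcont₁
  have h₂ := tame_of_hyps hT hmem₂ hM₂ hcont₂
  have hc0 : clamp T 0 = 0 := clamp_of_mem ⟨le_rfl, hT.le⟩
  have key := eq_of_tInt hγ0 h₁ h₂ (hsol₁.tInt hT h₁) (hsol₂.tInt hT h₂)
    (fun t _ => hPNpos _ (clamp_mem hT t)) (by simp only [hc0, hinit₁, hinit₂])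
  intro t ht x
  simpa only [clamp_of_mem ht] using key t ht x

end FifthOrderStmt3
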